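/- arXiv:1102.4292 — 4 statements merged into one kernel-verified Lean document; each statement's English description precedes it below -/
import Mathlib

section
/- Let Γ be a k-regular graph with ν vertices whose second largest adjacency eigenvalue is at most 1. Let {A, B} be a partition of the vertex set with |A| = a > 0 and |B| = b > 0, and suppose the partition has quotient matrix [[k−α, α],[β, k−β]] (i.e., each vertex of A has on average α neighbors in B, and each vertex of B has on average β neighbors in A). Then α ≥ (k−1)b/ν. -/
/-!
Double counting turns the Rayleigh quotient of the vector `f = ν·1_A - |A|·1`, which is orthogonal
to the all-ones vector, into an expression in the number `e = α|A|` of edges between `A` and its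
complement. If `k > 1`, every eigenvector for an eigenvalue `≤ 1` is orthogonal to the all-ones
vector, so the single exceptional eigenvector must be proportional to the all-ones vector; hence the
adjacency matrix has Rayleigh quotient at most `1` on `f` (`dotProduct_mulVec_le`), and this is the
bound. If `k ≤ 1`, the bound only says that a nonpositive number is at most `α ≥ 0`.
-/

open SimpleGraph Finset
/-- The second largest eigenvalue of the real symmetric matrix `A` is at most `t`:
all eigenvalues except (possibly) one are at most `t`. -/
def Matrix.SecondEigLE {n : Type*} [Fintype n] [DecidableEq n]
    (A : Matrix n n ℝ) (t : ℝ) : Prop :=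
  ∀ hA : A.IsHermitian, ∃ i, ∀ j, j ≠ i → hA.eigenvalues j ≤ t

open scoped Matrix

/-- Parseval's identity for the eigenvector basis, in terms of `dotProduct`. -/
lemma dotProduct_eq_sum_eigenvectorBasis {n : Type*} [Fintype n] [DecidableEq n]
    {M : Matrix n n ℝ} (hM : M.IsHermitian) (x y : n → ℝ) :
    x ⬝ᵥ y = ∑ j, ((hM.eigenvectorBasis j).ofLp ⬝ᵥ x) * ((hM.eigenvectorBasis j).ofLp ⬝ᵥ y) := by
  have h := hM.eigenvectorBasis.sum_inner_mul_inner (WithLp.toLp 2 x) (WithLp.toLp 2 y)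
  simp only [EuclideanSpace.inner_eq_star_dotProduct, star_trivial] at h
  rw [dotProduct_comm x y, ← h]
  exact Finset.sum_congr rfl fun j _ => by rw [dotProduct_comm y]

lemma eigenvectorBasis_dotProduct_mulVec {n : Type*} [Fintype n] [DecidableEq n]
    {M : Matrix n n ℝ} (hM : M.IsHermitian) (x : n → ℝ) (j : n) :
    (hM.eigenvectorBasis j).ofLp ⬝ᵥ (M *ᵥ x)
      = hM.eigenvalues j * ((hM.eigenvectorBasis j).ofLp ⬝ᵥ x) := by
  have hT : Mᵀ = M := by simpa [Matrix.IsHermitian] using hM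
  rw [Matrix.dotProduct_mulVec, ← Matrix.mulVec_transpose, hT, hM.mulVec_eigenvectorBasis,
    smul_dotProduct, smul_eq_mul]

/-- If `u ≠ 0` is an eigenvector whose eigenvalue `k` exceeds the bound `t` on the second eigenvalue,
then the Rayleigh quotient is at most `t` on the orthogonal complement of `u`. -/
lemma dotProduct_mulVec_le {n : Type*} [Fintype n] [DecidableEq n]
    {M : Matrix n n ℝ} (hM : M.IsHermitian) {t k : ℝ} (h : Matrix.SecondEigLE M t) (hk : t < k)
    {u f : n → ℝ} (hu0 : u ≠ 0) (hu : M *ᵥ u = k • u) (hf : u ⬝ᵥ f = 0) :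
    f ⬝ᵥ (M *ᵥ f) ≤ t * (f ⬝ᵥ f) := by
  obtain ⟨i, hi⟩ := h hM
  have hperp : ∀ j, j ≠ i → (hM.eigenvectorBasis j).ofLp ⬝ᵥ u = 0 := by
    intro j hj
    have h2 := eigenvectorBasis_dotProduct_mulVec hM u j
    rw [hu, dotProduct_smul, smul_eq_mul] at h2
    have h3 : (k - hM.eigenvalues j) * ((hM.eigenvectorBasis j).ofLp ⬝ᵥ u) = 0 := by linarith
    exact (mul_eq_zero.mp h3).resolve_left (by linarith [hi j hj])
  have hexp : ∀ y, u ⬝ᵥ y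
      = ((hM.eigenvectorBasis i).ofLp ⬝ᵥ u) * ((hM.eigenvectorBasis i).ofLp ⬝ᵥ y) := by
    intro y
    rw [dotProduct_eq_sum_eigenvectorBasis hM]
    exact Finset.sum_eq_single i (fun j _ hj => by rw [hperp j hj, zero_mul]) (by simp)
  have hui : (hM.eigenvectorBasis i).ofLp ⬝ᵥ u ≠ 0 := by
    intro h0
    apply hu0
    rw [← dotProduct_self_eq_zero, hexp u, h0, zero_mul]
  have hfi : (hM.eigenvectorBasis i).ofLp ⬝ᵥ f = 0 :=
    (mul_eq_zero.mp ((hexp f).symm.trans hf)).resolve_left hui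
  rw [dotProduct_eq_sum_eigenvectorBasis hM f (M *ᵥ f), dotProduct_eq_sum_eigenvectorBasis hM f f,
    Finset.mul_sum]
  refine Finset.sum_le_sum fun j _ => ?_
  rw [eigenvectorBasis_dotProduct_mulVec]
  by_cases hj : j = i
  · rw [hj, hfi]; simp
  · nlinarith [mul_le_mul_of_nonneg_right (hi j hj)
      (mul_self_nonneg ((hM.eigenvectorBasis j).ofLp ⬝ᵥ f))]

theorem quotient_partition_bound {V : Type*} [Fintype V] [DecidableEq V]
    (G : SimpleGraph V) [DecidableRel G.Adj] (k : ℕ) (hreg : G.IsRegularOfDegree k)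
    (h1 : Matrix.SecondEigLE (G.adjMatrix ℝ) 1)
    (A : Finset V) (hA : A.Nonempty) (hB : Aᶜ.Nonempty)
    (α β : ℝ)
    (hα : (∑ x ∈ A, (((G.neighborFinset x).filter (· ∈ Aᶜ)).card : ℝ)) = α * A.card)
    (hβ : (∑ x ∈ Aᶜ, (((G.neighborFinset x).filter (· ∈ A)).card : ℝ)) = β * Aᶜ.card) :
    ((k : ℝ) - 1) * Aᶜ.card / (Fintype.card V) ≤ α := by
  have ha : (0 : ℝ) < #A := by exact_mod_cast hA.card_pos
  have hb : (0 : ℝ) < #Aᶜ := by exact_mod_cast hB.card_pos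
  have hν : (#A : ℝ) + #Aᶜ = Fintype.card V := by exact_mod_cast A.card_add_card_compl
  have hνpos : (0 : ℝ) < Fintype.card V := by linarith
  rw [div_le_iff₀ hνpos]
  by_cases hk : (k : ℝ) ≤ 1
  · have hα0 : 0 ≤ α := by
      refine nonneg_of_mul_nonneg_left ?_ ha
      rw [← hα]
      positivity
    nlinarith [mul_nonneg hα0 hνpos.le, mul_nonneg (sub_nonneg.2 hk) hb.le]
  push Not at hk
  set M := G.adjMatrix ℝ with hMdef
  set u : V → ℝ := fun _ => 1 with hu
  set g : V → ℝ := fun x => if x ∈ A then 1 else 0 with hg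
  have hT : Mᵀ = M := G.transpose_adjMatrix
  have hM : M.IsHermitian := by simpa [Matrix.IsHermitian] using hT
  have hMu : M *ᵥ u = (k : ℝ) • u := by
    ext x
    simp [hMdef, hu, SimpleGraph.adjMatrix_mulVec_apply, hreg.degree_eq x]
  have huu : u ⬝ᵥ u = Fintype.card V := by simp [hu, dotProduct]
  have hug : u ⬝ᵥ g = #A := by simp [hu, hg, dotProduct]
  have hgg : g ⬝ᵥ g = #A := by simp [hg, dotProduct]
  have huMg : u ⬝ᵥ (M *ᵥ g) = k * #A := by
    rw [Matrix.dotProduct_mulVec, ← Matrix.mulVec_transpose, hT, hMu, smul_dotProduct, hug,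
      smul_eq_mul]
  have hgMg : g ⬝ᵥ (M *ᵥ g) = k * #A - α * #A := by
    have h2 : g ⬝ᵥ (M *ᵥ g) = ∑ x ∈ A, (#{y ∈ G.neighborFinset x | y ∈ A} : ℝ) := by
      simp [hg, hMdef, dotProduct, SimpleGraph.adjMatrix_mulVec_apply, Finset.filter_mem_eq_inter]
    rw [h2, ← hα, eq_sub_iff_add_eq, ← Finset.sum_add_distrib]
    have h3 : ∀ x ∈ A, (#{y ∈ G.neighborFinset x | y ∈ A} : ℝ)
        + #{y ∈ G.neighborFinset x | y ∈ Aᶜ} = k := by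
      intro x _
      simp only [Finset.mem_compl]
      rw [← hreg.degree_eq x, ← G.card_neighborFinset_eq_degree]
      exact_mod_cast Finset.card_filter_add_card_filter_not (s := G.neighborFinset x) (· ∈ A)
    rw [Finset.sum_congr rfl h3, Finset.sum_const, nsmul_eq_mul, mul_comm]
  have hu0 : u ≠ 0 := by
    intro h0
    rw [h0, zero_dotProduct] at huu
    linarith
  have hgu : g ⬝ᵥ u = #A := by rw [dotProduct_comm, hug]
  have key := dotProduct_mulVec_le hM h1 hk hu0 hMu
    (f := (Fintype.card V : ℝ) • g - (#A : ℝ) • u)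
    (by simp only [dotProduct_sub, dotProduct_smul, hug, huu, smul_eq_mul]; ring)
  simp only [Matrix.mulVec_sub, Matrix.mulVec_smul, hMu, dotProduct_sub, dotProduct_smul,
    sub_dotProduct, smul_dotProduct, hug, huu, hgg, hgu, huMg, hgMg, smul_eq_mul] at key
  rw [← hν] at key ⊢
  -- `key` is the goal multiplied by `ν * |A|`.
  have hpos : 0 < (#A : ℝ) * (#A + #Aᶜ) := by positivity
  refine le_of_mul_le_mul_left ?_ hpos
  nlinarith [key]
end

section
/- Let Γ be a distance-regular graph with diameter D and intersection numbers b_i, c_i. If Γ contains an induced quadrangle (4-cycle), then for all i with 2 ≤ i ≤ D, c_i − b_i ≥ c_{i−1} − b_{i−1} + a₁ + 2. -/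
/-!
The proof averages a pointwise inequality over all vertices. For an induced quadrangle `p q r s`
put `χ = p - q + r - s`, let `U` be the `0/1` matrix of the relation `dist < i`, and let `F` be the
distance matrix. At every vertex `w` the numbers `(χᵀ U)(w)` and `(F χ)(w)` have opposite signs
(`quadrangle_pointwise`), because distances to consecutive corners differ by at most one. Hence
`χᵀ (U * F) χ ≤ 0`.

In a distance-regular graph `U * F` depends only on the distance (`exists_R_mul_R`), say
`U * F = R t`, so the left side is `4 (t 0 - 2 t 1 + t 2)`. Comparing `A * (U * F)` with
`U * (A * F)`, where `A * F = k F + R (b - c)`, at distances `0` and `1` gives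
`b₁ (t 0 - 2 t 1 + t 2) = e (a₁ + 2 + (bᵢ - cᵢ) - (bᵢ₋₁ - cᵢ₋₁))`, where `e > 0` is the number of
vertices at distances `i - 1` and `i` from the two ends of an edge (`sub_eq_edgeCount_mul`).
Dividing by `e` gives the claim.
-/

open SimpleGraph Finset

/-- A distance-regular graph with diameter `D` and intersection numbers `b i`, `c i`. -/
structure SimpleGraph.IsDRG {V : Type*} [Fintype V] [DecidableEq V]
    (G : SimpleGraph V) [DecidableRel G.Adj] (D : ℕ) (b c : ℕ → ℕ) : Prop where
  connected : G.Connected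
  dist_le : ∀ x y : V, G.dist x y ≤ D
  exists_dist : ∃ x y : V, G.dist x y = D
  b_eq : ∀ i ≤ D, ∀ x y : V, G.dist x y = i →
    ((G.neighborFinset y).filter (fun z => G.dist x z = i + 1)).card = b i
  c_eq : ∀ i ≤ D, ∀ x y : V, G.dist x y = i →
    ((G.neighborFinset y).filter (fun z => G.dist x z + 1 = i)).card = c i
  b_last : b D = 0
  c_zero : c 0 = 0

instance {V : Type*} (G : SimpleGraph V) [DecidableRel G.Adj] (s : Set V) :
    DecidableRel (G.induce s).Adj := fun a b => inferInstanceAs (Decidable (G.Adj a b))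

/-- The local graph of `G` at `x`: the subgraph induced on the neighbours of `x`. -/
abbrev SimpleGraph.localGraph {V : Type*} [Fintype V] [DecidableEq V]
    (G : SimpleGraph V) [DecidableRel G.Adj] (x : V) : SimpleGraph (G.neighborSet x) :=
  G.induce (G.neighborSet x)

/-- `G` contains an induced quadrangle (4-cycle). -/
def SimpleGraph.HasInducedQuadrangle {V : Type*} (G : SimpleGraph V) : Prop :=
  ∃ p q r s : V, p ≠ q ∧ p ≠ r ∧ p ≠ s ∧ q ≠ r ∧ q ≠ s ∧ r ≠ s ∧
    G.Adj p q ∧ G.Adj q r ∧ G.Adj r s ∧ G.Adj s p ∧ ¬ G.Adj p r ∧ ¬ G.Adj q s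


namespace TerwilligerAux

variable {V : Type*} (G : SimpleGraph V)

/-- The radial matrix of `f`: its `(x, y)` entry is `f (dist x y)`. -/
noncomputable def R (f : ℕ → ℚ) : Matrix V V ℚ := Matrix.of fun x y => f (G.dist x y)

/-- The action of the adjacency matrix on radial functions:
`d ↦ b d * f (d + 1) + a d * f d + c d * f (d - 1)` with `a d = b 0 - b d - c d`.
At `d = 0` the truncated `d - 1` is harmless,
since there the coefficient is `c 0 = 0`. -/
def step (b c : ℕ → ℕ) (f : ℕ → ℚ) (d : ℕ) : ℚ :=
  b d * f (d + 1) + ((b 0 : ℚ) - b d - c d) * f d + c d * f (d - 1)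

/-- The number of vertices at distance `i` from `x` and `i + 1` from `y`. -/
noncomputable def edgeCount [Fintype V] (i : ℕ) (x y : V) : ℕ :=
  (univ.filter fun w => G.dist x w = i ∧ G.dist y w = i + 1).card

variable {G}

theorem R_entry (f : ℕ → ℚ) (x y : V) : R G f x y = f (G.dist x y) := rfl

theorem R_transpose (f : ℕ → ℚ) : (R G f).transpose = R G f := by
  ext x y
  simp [R_entry, Matrix.transpose_apply, G.dist_comm (u := y) (v := x)]

/-- Along an edge, the distance to a fixed vertex changes by at most one. -/
theorem dist_bounds (hc : G.Connected) {y z : V} (h : G.Adj y z) (x : V) :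
    G.dist x z ≤ G.dist x y + 1 ∧ G.dist x y ≤ G.dist x z + 1 := by
  have h1 : G.dist y z = 1 := dist_eq_one_iff_adj.2 h
  have h2 : G.dist z y = 1 := dist_eq_one_iff_adj.2 h.symm
  have h3 := hc.dist_triangle (u := x) (v := y) (w := z)
  have h4 := hc.dist_triangle (u := x) (v := z) (w := y)
  omega

theorem exists_pred (hc : G.Connected) {x y : V} {j : ℕ} (h : G.dist x y = j + 1) :
    ∃ z, G.Adj y z ∧ G.dist x z = j := by
  obtain ⟨p, hp⟩ := hc.exists_walk_length_eq_dist y x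
  rw [G.dist_comm, h] at hp
  cases p with
  | nil => simp at hp
  | cons hz q =>
    rename_i z
    refine ⟨z, hz, ?_⟩
    have h1 := G.dist_le q
    rw [G.dist_comm] at h1
    have h2 := (dist_bounds hc hz x).2
    simp at hp
    omega

theorem exists_dist_eq (hc : G.Connected) {x y : V} (n j : ℕ) (h : G.dist x y = j + n) :
    ∃ z, G.dist x z = j := by
  induction n generalizing y with
  | zero => exact ⟨y, h⟩
  | succ n ih =>
    obtain ⟨z, -, hz⟩ := exists_pred hc (j := j + n) h
    exact ih hz

/-- Moving one end of a convolution with the ball `dist < i + 1` along an edge only affects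
the vertices whose distances to the two ends are `i` and `i + 1`. -/
theorem ball_mul_sub [Fintype V] (hc : G.Connected) (f : ℕ → ℚ) (i : ℕ) {p q : V} (h : G.Adj p q) :
    (R G (fun d => if d < i + 1 then 1 else 0) * R G f) p q
      - (R G (fun d => if d < i + 1 then 1 else 0) * R G f) q q
      = edgeCount G i p q * f (i + 1) - edgeCount G i q p * f i := by
  simp only [Matrix.mul_apply, R_entry, edgeCount, Finset.card_filter, ← Finset.sum_sub_distrib]
  push_cast
  rw [Finset.sum_mul, Finset.sum_mul, ← Finset.sum_sub_distrib]
  refine Finset.sum_congr rfl fun w _ => ?_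
  have hb := dist_bounds hc h w
  rw [G.dist_comm (u := w) (v := p), G.dist_comm (u := w) (v := q)] at hb
  rw [G.dist_comm (u := w) (v := q)]
  generalize G.dist p w = m at *
  generalize G.dist q w = n at *
  by_cases h1 : m = i ∧ n = i + 1
  · obtain ⟨rfl, rfl⟩ := h1; simp
  by_cases h2 : n = i ∧ m = i + 1
  · obtain ⟨rfl, rfl⟩ := h2; simp
  rw [if_neg h1, if_neg h2]
  by_cases h3 : m < i + 1
  · rw [if_pos h3, if_pos (by omega)]; ring
  · rw [if_neg h3, if_neg (by omega)]; ring

section drg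

variable [Fintype V] [DecidableEq V] [DecidableRel G.Adj] {D : ℕ} {b c : ℕ → ℕ}

theorem card_neighborFinset (hG : G.IsDRG D b c) (y : V) :
    (G.neighborFinset y).card = b 0 := by
  rw [← hG.b_eq 0 (Nat.zero_le _) y y (by simp)]
  congr 1
  ext z
  simp

theorem sum_neighbors (hG : G.IsDRG D b c) (f : ℕ → ℚ) (x y : V) :
    ∑ z ∈ G.neighborFinset y, f (G.dist x z) = step b c f (G.dist x y) := by
  set d := G.dist x y with hd
  have key : ∀ z ∈ G.neighborFinset y, f (G.dist x z) =
      f d + (if G.dist x z = d + 1 then (f (d + 1) - f d) else 0)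
        + (if G.dist x z + 1 = d then (f (d - 1) - f d) else 0) := by
    intro z hz
    have hb := dist_bounds hG.connected ((G.mem_neighborFinset y z).1 hz) x
    rw [← hd] at hb
    have hcases : G.dist x z = d + 1 ∨ G.dist x z = d ∨ G.dist x z + 1 = d := by omega
    rcases hcases with h | h | h
    · rw [h, if_pos rfl, if_neg (by omega)]; ring
    · rw [h, if_neg (by omega), if_neg (by omega)]; ring
    · rw [if_neg (by omega), if_pos h, ← h]
      simp
  rw [Finset.sum_congr rfl key, Finset.sum_add_distrib, Finset.sum_add_distrib,
    ← Finset.sum_filter, ← Finset.sum_filter, Finset.sum_const, Finset.sum_const,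
    Finset.sum_const, hG.b_eq d (hG.dist_le x y) x y rfl, hG.c_eq d (hG.dist_le x y) x y rfl,
    card_neighborFinset hG]
  simp only [nsmul_eq_mul, step]
  ring

theorem adj_mul_R (hG : G.IsDRG D b c) (f : ℕ → ℚ) :
    G.adjMatrix ℚ * R G f = R G (step b c f) := by
  ext x y
  rw [adjMatrix_mul_apply, R_entry, G.dist_comm, ← sum_neighbors hG]
  exact Finset.sum_congr rfl fun z _ => by rw [R_entry, G.dist_comm]

theorem adj_comm_R (hG : G.IsDRG D b c) (f : ℕ → ℚ) :
    G.adjMatrix ℚ * R G f = R G f * G.adjMatrix ℚ := by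
  have h := congrArg Matrix.transpose (adj_mul_R hG f)
  rw [R_transpose, Matrix.transpose_mul, R_transpose, transpose_adjMatrix] at h
  rw [h, adj_mul_R hG]

theorem c_pos (hG : G.IsDRG D b c) {j : ℕ} (hj : j + 1 ≤ D) : 0 < c (j + 1) := by
  obtain ⟨x, y, hxy⟩ := hG.exists_dist
  obtain ⟨z, hz⟩ := exists_dist_eq hG.connected (D - (j + 1)) (j + 1) (by omega : _ = _)
    (x := x) (y := y)
  obtain ⟨w, hw, hwd⟩ := exists_pred hG.connected hz
  rw [← hG.c_eq (j + 1) hj x z hz]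
  exact Finset.card_pos.2 ⟨w, by simp [hw, hwd]⟩

theorem c_one (hG : G.IsDRG D b c) {p q : V} (h : G.Adj p q) : c 1 = 1 := by
  have h1 : G.dist p q = 1 := dist_eq_one_iff_adj.2 h
  rw [← hG.c_eq 1 (h1 ▸ hG.dist_le p q) p q h1, Finset.card_eq_one]
  refine ⟨p, ?_⟩
  ext z
  simp only [mem_filter, mem_neighborFinset, mem_singleton, Nat.add_eq_right,
    hG.connected.dist_eq_zero_iff]
  constructor
  · rintro ⟨_, h⟩; exact h.symm
  · rintro rfl; exact ⟨h.symm, rfl⟩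

/-- The distance-`j` matrix times a radial matrix is radial: by the three-term recurrence,
`c (j + 1) A (j + 1) = A * A j - a j A j - b (j - 1) A (j - 1)`. -/
theorem exists_single_mul_R (hG : G.IsDRG D b c) (g : ℕ → ℚ) (j : ℕ) :
    ∃ t, R G (Pi.single j 1) * R G g = R G t := by
  induction j using Nat.strong_induction_on with
  | _ j ih =>
  match j, ih with
  | 0, _ =>
    refine ⟨g, ?_⟩
    have : R G (Pi.single 0 1) = 1 := by
      ext x y
      simp [R_entry, Pi.single_apply, Matrix.one_apply, hG.connected.dist_eq_zero_iff]
    rw [this, one_mul]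
  | j + 1, ih =>
    -- Beyond the diameter the distance matrix vanishes.
    by_cases hj : j + 1 ≤ D
    swap
    · refine ⟨0, ?_⟩
      have : R G (Pi.single (j + 1) 1) = 0 := by
        ext x y
        have := hG.dist_le x y
        simp [R_entry, Pi.single_apply]
        omega
      rw [this, zero_mul]
      rfl
    have hc : (c (j + 1) : ℚ) ≠ 0 := by exact_mod_cast (c_pos hG hj).ne'
    obtain ⟨t, ht⟩ := ih j (by omega)
    -- At `j = 0` the term `b (j - 1) A (j - 1)` of the recurrence is absent.
    obtain ⟨t', ht'⟩ : ∃ t', R G (if j = 0 then 0 else Pi.single (j - 1) 1) * R G g = R G t' := by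
      split_ifs with h0
      · refine ⟨0, ?_⟩
        have : R G (0 : ℕ → ℚ) = 0 := rfl
        rw [this, zero_mul]
      · exact ih (j - 1) (by omega)
    have hrec : R G (Pi.single (j + 1) 1) = (c (j + 1) : ℚ)⁻¹ •
        (G.adjMatrix ℚ * R G (Pi.single j 1) - ((b 0 : ℚ) - b j - c j) • R G (Pi.single j 1)
          - (b (j - 1) : ℚ) • R G (if j = 0 then 0 else Pi.single (j - 1) 1)) := by
      rw [adj_mul_R hG, eq_inv_smul_iff₀ hc]
      ext x y
      simp only [Matrix.smul_apply, Matrix.sub_apply, R_entry, smul_eq_mul, step]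
      generalize G.dist x y = d
      rcases Nat.eq_zero_or_pos j with rfl | hj0
      · rcases d with _ | _ | d
        · simp [hG.c_zero]
        · simp
        · simp
      · obtain ⟨m, rfl⟩ : ∃ m, j = m + 1 := ⟨j - 1, by omega⟩
        simp only [Nat.add_sub_cancel, Nat.add_eq_zero_iff, one_ne_zero, and_false, if_false]
        by_cases h1 : d = m + 2
        · subst h1; simp
        by_cases h2 : d = m + 1
        · subst h2; simp
        by_cases h3 : d = m
        · subst h3; simp [Pi.single_apply]; omega
        · have h4 : d - 1 ≠ m + 1 := by omega
          simp [h1, h2, h3, h4]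
    refine ⟨fun d => (c (j + 1) : ℚ)⁻¹ *
      (step b c t d - ((b 0 : ℚ) - b j - c j) * t d - (b (j - 1) : ℚ) * t' d), ?_⟩
    rw [hrec, smul_mul_assoc, sub_mul, sub_mul, smul_mul_assoc, smul_mul_assoc, mul_assoc, ht, ht',
      adj_mul_R hG]
    rfl

/-- The relation `dist < i` times a radial matrix is radial. -/
theorem exists_R_mul_R (hG : G.IsDRG D b c) (g : ℕ → ℚ) (i : ℕ) :
    ∃ t, R G (fun d => if d < i then 1 else 0) * R G g = R G t := by
  choose t ht using exists_single_mul_R hG g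
  refine ⟨fun d => ∑ j ∈ range i, t j d, ?_⟩
  have : R G (fun d => if d < i then 1 else 0) = ∑ j ∈ range i, R G (Pi.single j 1) := by
    ext x y
    simp [Matrix.sum_apply, R_entry, Pi.single_apply]
  rw [this, Finset.sum_mul, Finset.sum_congr rfl fun j _ => ht j]
  ext x y
  simp [Matrix.sum_apply, R_entry]

theorem edgeCount_comm (hG : G.IsDRG D b c) (i : ℕ) {p q : V} (h : G.Adj p q) :
    edgeCount G i p q = edgeCount G i q p := by
  -- All balls of radius `i` have the same size: convolve with the constant function `1`.
  obtain ⟨t, ht⟩ := exists_R_mul_R hG (fun _ => 1) (i + 1)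
  have h1 := ball_mul_sub hG.connected (fun _ => 1) i h
  have h2 : (R G (fun d => if d < i + 1 then 1 else 0) * R G (fun _ => 1)) q q =
      (R G (fun d => if d < i + 1 then 1 else 0) * R G (fun _ => 1)) q p := by
    simp [Matrix.mul_apply, R_entry]
  rw [h2, ht, R_entry, R_entry, G.dist_comm, sub_self, mul_one, mul_one] at h1
  exact_mod_cast (sub_eq_zero.1 h1.symm)

/-- Two instances are used: `f d = d` identifies the edge count as `t 1 - t 0`, and
`f = b - c` produces the difference of intersection numbers in the final inequality. -/
theorem sub_eq_edgeCount_mul (hG : G.IsDRG D b c) (f : ℕ → ℚ) (i : ℕ) {p q : V}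
    (h : G.Adj p q) :
    (R G (fun d => if d < i + 1 then 1 else 0) * R G f) p q
      - (R G (fun d => if d < i + 1 then 1 else 0) * R G f) q q
      = edgeCount G i p q * (f (i + 1) - f i) := by
  rw [ball_mul_sub hG.connected f i h, edgeCount_comm hG i h.symm]
  ring

end drg

/-- For the distances `x, y, z, u` from a vertex to the consecutive corners of a quadrangle, the
alternating count of corners at distance less than `n` and the alternating sum of the distances
have opposite signs. -/
theorem quadrangle_pointwise (n x y z u : ℕ) (h1 : y ≤ x + 1 ∧ x ≤ y + 1)
    (h2 : z ≤ y + 1 ∧ y ≤ z + 1) (h3 : u ≤ z + 1 ∧ z ≤ u + 1) (h4 : x ≤ u + 1 ∧ u ≤ x + 1) :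
    ((if x < n then 1 else 0) - (if y < n then 1 else 0) + (if z < n then 1 else 0)
      - (if u < n then 1 else 0) : ℤ) * ((x : ℤ) - y + z - u) ≤ 0 := by
  split_ifs <;> norm_num <;> omega

end TerwilligerAux

open TerwilligerAux in
theorem terwilliger_inequality {V : Type*} [Fintype V] [DecidableEq V]
    (G : SimpleGraph V) [DecidableRel G.Adj] (D : ℕ) (b c : ℕ → ℕ)
    (hG : G.IsDRG D b c) (hquad : G.HasInducedQuadrangle) :
    ∀ i, 2 ≤ i → i ≤ D →
      (c (i - 1) : ℤ) - (b (i - 1) : ℤ) + ((b 0 : ℤ) - b 1 - 1) + 2 ≤ (c i : ℤ) - (b i : ℤ) := by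
  intro n hn hnD
  obtain ⟨i, rfl⟩ : ∃ i, n = i + 1 := ⟨n - 1, by omega⟩
  obtain ⟨p, q, r, s, -, hpr, -, -, hqs, -, pq, qr, rs, sp, npr, nqs⟩ := hquad
  have hc := hG.connected
  have two : ∀ {x y z : V}, G.Adj x y → G.Adj y z → x ≠ z → ¬ G.Adj x z → G.dist x z = 2 := by
    intro x y z hxy hyz hne hna
    have h1 := hc.one_lt_dist_of_ne_of_not_adj hne hna
    have h2 := (dist_bounds hc hyz x).1
    rw [dist_eq_one_iff_adj.2 hxy] at h2
    omega
  have dpr := two pq qr hpr npr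
  have dqs := two qr rs hqs nqs
  have one : ∀ {x y : V}, G.Adj x y → G.dist x y = 1 := fun h => dist_eq_one_iff_adj.2 h
  set U := R G (fun d => if d < i + 1 then 1 else 0) with hU
  set F := R G (fun d => (d : ℚ)) with hF
  obtain ⟨t, ht⟩ : ∃ t, U * F = R G t := exists_R_mul_R hG _ _
  have hsum : t 0 - 2 * t 1 + t 2 ≤ 0 := by
    have hle : ∑ w, (U p w - U q w + U r w - U s w) * (F w p - F w q + F w r - F w s) ≤ 0 := by
      refine Finset.sum_nonpos fun w _ => ?_
      have := quadrangle_pointwise (i + 1) (G.dist w p) (G.dist w q) (G.dist w r) (G.dist w s)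
        (dist_bounds hc pq w) (dist_bounds hc qr w) (dist_bounds hc rs w) (dist_bounds hc sp w)
      simp only [hU, hF, R_entry, G.dist_comm (v := w)]
      simp only [G.dist_comm (u := w)] at this ⊢
      exact_mod_cast this
    have heq : ∑ w, (U p w - U q w + U r w - U s w) * (F w p - F w q + F w r - F w s)
        = ((U * F) p p - (U * F) p q + (U * F) p r - (U * F) p s)
        - ((U * F) q p - (U * F) q q + (U * F) q r - (U * F) q s)
        + ((U * F) r p - (U * F) r q + (U * F) r r - (U * F) r s)
        - ((U * F) s p - (U * F) s q + (U * F) s r - (U * F) s s) := by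
      simp only [Matrix.mul_apply, ← Finset.sum_add_distrib, ← Finset.sum_sub_distrib]
      exact Finset.sum_congr rfl fun w _ => by ring
    -- Consecutive corners are at distance `1` and opposite ones at distance `2`.
    rw [heq, ht] at hle
    simp only [R_entry, SimpleGraph.dist_self, one pq, one qr, one rs, one sp, one pq.symm, one qr.symm,
      one rs.symm, one sp.symm, dpr, dqs, G.dist_comm (u := r) (v := p),
      G.dist_comm (u := s) (v := q)] at hle
    linarith
  -- The edge count is `t 1 - t 0` for every edge, so positivity on one suitable edge suffices.
  have he : ∀ {x y : V}, G.Adj x y → t 1 - t 0 = edgeCount G i x y := by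
    intro x y h
    have := sub_eq_edgeCount_mul hG (fun d => (d : ℚ)) i h
    rw [← hU, ← hF, ht, R_entry, R_entry, one h, SimpleGraph.dist_self] at this
    rw [this]
    push_cast
    ring
  have hepos : 0 < t 1 - t 0 := by
    obtain ⟨x, y, hxy⟩ := hG.exists_dist
    obtain ⟨z, hz⟩ := exists_dist_eq hc (D - (i + 1)) (i + 1) (by omega : G.dist x y = _)
    obtain ⟨w, hw, hwd⟩ := exists_pred hc hz
    rw [he hw.symm]
    have : 0 < edgeCount G i w z := Finset.card_pos.2
      ⟨x, by simp [G.dist_comm (v := x), hz, hwd]⟩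
    exact_mod_cast this
  have hF' : G.adjMatrix ℚ * F = (b 0 : ℚ) • F + R G (fun d => (b d : ℚ) - c d) := by
    rw [hF, adj_mul_R hG]
    ext x y
    simp only [Matrix.add_apply, Matrix.smul_apply, R_entry, step, smul_eq_mul]
    rcases G.dist x y with _ | d
    · simp [hG.c_zero]
    · push_cast [Nat.add_sub_cancel]
      ring
  have hAM : R G (step b c t) = (b 0 : ℚ) • R G t + U * R G (fun d => (b d : ℚ) - c d) := by
    rw [← adj_mul_R hG, ← ht, ← mul_assoc, adj_comm_R hG, mul_assoc, hF', mul_add,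
      mul_smul_comm]
  -- The two relations are `hAM` read at distances `0` and `1`.
  have h0 := congrFun (congrFun hAM q) q
  have h1 := congrFun (congrFun hAM p) q
  have h2 := sub_eq_edgeCount_mul hG (fun d => (b d : ℚ) - c d) i pq
  rw [← hU, ← he pq] at h2
  simp only [Matrix.add_apply, Matrix.smul_apply, R_entry, step, smul_eq_mul, SimpleGraph.dist_self, one pq,
    hG.c_zero, c_one hG pq] at h0 h1
  norm_num at h0 h1
  have hb1 : (0 : ℚ) ≤ b 1 := by positivity
  have key : (t 1 - t 0) * (((b (i + 1) : ℚ) - c (i + 1)) - (b i - c i) + (b 0 - b 1 - 1) + 2)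
      = b 1 * (t 0 - 2 * t 1 + t 2) := by
    linear_combination h0 - h1 - h2
  have hle : ((b (i + 1) : ℚ) - c (i + 1)) - (b i - c i) + (b 0 - b 1 - 1) + 2 ≤ 0 := by
    have : b 1 * (t 0 - 2 * t 1 + t 2) ≤ 0 := mul_nonpos_of_nonneg_of_nonpos hb1 hsum
    by_contra hcon
    have := mul_pos hepos (not_le.1 hcon)
    linarith
  have hle' : ((b (i + 1) : ℤ) - c (i + 1)) - (b i - c i) + (b 0 - b 1 - 1) + 2 ≤ 0 := by
    exact_mod_cast hle
  rw [Nat.add_sub_cancel]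
  linarith
end

section
/- Let Γ be a distance-regular graph with diameter D, valency k, and intersection numbers a₁ and c_D. If Γ contains an induced quadrangle, then D ≤ (k + c_D)/(a₁ + 2), and in particular D ≤ 2k/(a₁ + 2). -/
/-!
The diameter bound follows from Terwilliger's inequality
`c i - b i ≥ c (i - 1) - b (i - 1) + a₁ + 2` for `1 ≤ i ≤ D`, summed over `i`.

For `i = 1` the inequality is an equality. For `i ≥ 2`, fix an induced quadrangle and look at the
distances from an arbitrary vertex `z` to its four corners. Consecutive distances differ by at most
one, and a short case analysis (`quad_pointwise`) gives, for every `z`,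
`#(sides with distances (i-1, i)) ≥ 2 #(diagonals (i-2, i)) + 2 #(diagonals (i-1, i+1))
+ #(diagonals (i-1, i))`, sides and diagonals being taken with both orientations.
Summing over `z` gives `2 p¹(i-1,i) ≥ 2 p²(i-2,i) + 2 p²(i-1,i+1) + p²(i-1,i)`, where `pʰ(i,j)` is
the number of vertices at distances `i` and `j` from the two members of a pair at distance `h`.

That these numbers depend only on `h` is `exists_interNum`. The three-term recurrence `interNum_rec`
expresses each `p²` above as a multiple of `p¹(i-1,i)`, and dividing by `p¹(i-1,i) > 0` leaves
Terwilliger's inequality.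
-/

open SimpleGraph Finset

/-! ### The action of the adjacency matrix on functions of the distance -/

namespace SimpleGraph

variable {V : Type*} [Fintype V] [DecidableEq V] {G : SimpleGraph V} [DecidableRel G.Adj]
  {D : ℕ} {b c : ℕ → ℕ}

/-- The tridiagonal operator by which the adjacency matrix acts on functions of the distance to a
fixed vertex. At `h = 0` the truncated `h - 1` is harmless because `c 0 = 0`. -/
def tridiag (b c : ℕ → ℕ) (f : ℕ → ℝ) (h : ℕ) : ℝ :=
  b h * f (h + 1) + ((b 0 : ℝ) - b h - c h) * f h + c h * f (h - 1)

/-- The indicator function of `{j}`. -/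
def delta (j h : ℕ) : ℝ := if h = j then 1 else 0

/-- The `(x, y)` entry of the product of the matrices `f (dist x z)` and `g (dist z y)`. -/
noncomputable def distConv (G : SimpleGraph V) (f g : ℕ → ℝ) (x y : V) : ℝ :=
  ∑ z, f (G.dist x z) * g (G.dist z y)

namespace IsDRG

lemma card_nbr (hG : G.IsDRG D b c) (y : V) : (G.neighborFinset y).card = b 0 := by
  rw [← hG.b_eq 0 (Nat.zero_le _) y y (by simp)]
  congr 1
  ext z
  simp [SimpleGraph.dist_eq_one_iff_adj]

lemma b_add_c_le (hG : G.IsDRG D b c) (x y : V) :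
    b (G.dist x y) + c (G.dist x y) ≤ b 0 := by
  rw [← hG.card_nbr y, ← hG.b_eq _ (hG.dist_le x y) x y rfl, ← hG.c_eq _ (hG.dist_le x y) x y rfl,
    ← card_union_of_disjoint]
  · exact card_le_card (union_subset (filter_subset _ _) (filter_subset _ _))
  · rw [Finset.disjoint_left]
    intro z hz hz'
    simp only [mem_filter] at hz hz'
    omega

lemma dist_cases (hG : G.IsDRG D b c) (x : V) {y z : V} (h : G.Adj y z) :
    G.dist x z ≤ G.dist x y + 1 ∧ G.dist x y ≤ G.dist x z + 1 := by
  have h1 := hG.connected.dist_triangle (u := x) (v := y) (w := z)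
  have h2 := hG.connected.dist_triangle (u := x) (v := z) (w := y)
  rw [dist_eq_one_iff_adj.2 h] at h1
  rw [dist_eq_one_iff_adj.2 h.symm] at h2
  exact ⟨h1, h2⟩

/-- Neighbour sums of a function of the distance to `x` are given by `tridiag`. -/
lemma sum_nbr (hG : G.IsDRG D b c) (f : ℕ → ℝ) (x y : V) :
    ∑ z ∈ G.neighborFinset y, f (G.dist x z) = tridiag b c f (G.dist x y) := by
  set h := G.dist x y with hh
  have hb := hG.b_eq h (hG.dist_le x y) x y rfl
  have hc := hG.c_eq h (hG.dist_le x y) x y rfl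
  have key : ∀ z ∈ G.neighborFinset y, f (G.dist x z) =
      f h + (if G.dist x z = h + 1 then f (h + 1) - f h else 0)
        + (if G.dist x z + 1 = h then f (h - 1) - f h else 0) := by
    intro z hz
    have := hG.dist_cases x ((G.mem_neighborFinset y z).1 hz)
    rw [← hh] at this
    by_cases h1 : G.dist x z = h + 1
    · rw [if_pos h1, if_neg (by omega), h1]; ring
    · by_cases h2 : G.dist x z + 1 = h
      · rw [if_neg h1, if_pos h2, show h - 1 = G.dist x z by omega]; ring
      · rw [if_neg h1, if_neg h2, show G.dist x z = h by omega]; ring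
  rw [sum_congr rfl key, sum_add_distrib, sum_add_distrib, ← sum_filter, ← sum_filter]
  simp only [sum_const, nsmul_eq_mul, hb, hc, hG.card_nbr, tridiag]
  ring

/-- Self-adjointness of the adjacency matrix, read on `distConv`. -/
lemma distConv_tridiag (hG : G.IsDRG D b c) (f g : ℕ → ℝ) (x y : V) :
    distConv G (tridiag b c f) g x y = distConv G f (tridiag b c g) x y := by
  unfold distConv
  have h1 : ∀ z, tridiag b c f (G.dist x z) * g (G.dist z y) =
      ∑ w, if G.Adj z w then f (G.dist x w) * g (G.dist z y) else 0 := by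
    intro z
    rw [← hG.sum_nbr, sum_mul, ← sum_filter]
    exact sum_congr (by ext; simp) fun _ _ => rfl
  have h2 : ∀ w, f (G.dist x w) * tridiag b c g (G.dist w y) =
      ∑ z, if G.Adj z w then f (G.dist x w) * g (G.dist z y) else 0 := by
    intro w
    rw [G.dist_comm (u := w), ← hG.sum_nbr, mul_sum, ← sum_filter]
    refine sum_congr (by ext; simp [G.adj_comm]) fun z _ => ?_
    rw [G.dist_comm (u := y)]
  simp only [h1, h2]
  exact sum_comm

lemma distConv_nbr (hG : G.IsDRG D b c) (f g : ℕ → ℝ) (x y : V) :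
    ∑ w ∈ G.neighborFinset y, distConv G f g x w = distConv G f (tridiag b c g) x y := by
  unfold distConv
  rw [sum_comm]
  refine sum_congr rfl fun z _ => ?_
  rw [← mul_sum, hG.sum_nbr]

lemma tridiag_delta_zero (hG : G.IsDRG D b c) :
    tridiag b c (delta 0) = fun h => (c 1 : ℝ) * delta 1 h := by
  funext h
  rcases h with _ | _ | h <;> simp [tridiag, delta, hG.c_zero]

lemma tridiag_delta_succ (b c : ℕ → ℕ) (j : ℕ) :
    tridiag b c (delta (j + 1)) = fun h => (b j : ℝ) * delta j h
      + ((b 0 : ℝ) - b (j + 1) - c (j + 1)) * delta (j + 1) h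
      + (c (j + 2) : ℝ) * delta (j + 2) h := by
  funext h
  unfold tridiag delta
  by_cases h1 : h = j
  · subst h1; simp
  · by_cases h2 : h = j + 1
    · subst h2; simp
    · by_cases h3 : h = j + 2
      · subst h3; simp
      · have h4 : h - 1 ≠ j + 1 := by omega
        simp [h1, h2, h3, h4]

/-! ### Positivity of the parameters -/

/-- A geodesic `w` of length `D` starting at some vertex `x`. -/
lemma exists_geodesic (hG : G.IsDRG D b c) :
    ∃ x : V, ∃ w : ℕ → V, ∀ i, i ≤ D → G.dist x (w i) = i ∧ (i < D → G.Adj (w i) (w (i + 1))) := by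
  obtain ⟨x, y, hxy⟩ := hG.exists_dist
  obtain ⟨p, hp⟩ := hG.connected.exists_walk_length_eq_dist x y
  refine ⟨x, p.getVert, fun i hi => ⟨?_, fun h => p.adj_getVert_succ (by omega)⟩⟩
  have h1 : G.dist x (p.getVert i) ≤ i :=
    (SimpleGraph.dist_le (p.take i)).trans (by simp)
  have h2 : G.dist (p.getVert i) y ≤ p.length - i :=
    (SimpleGraph.dist_le (p.drop i)).trans (by simp)
  have h3 := hG.connected.dist_triangle (u := x) (v := p.getVert i) (w := y)
  omega

lemma b_pos (hG : G.IsDRG D b c) {i : ℕ} (hi : i < D) : 0 < b i := by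
  obtain ⟨x, w, hw⟩ := hG.exists_geodesic
  rw [← hG.b_eq i hi.le x (w i) (hw i hi.le).1, card_pos]
  exact ⟨w (i + 1), by simpa [(hw (i + 1) hi).1] using (hw i hi.le).2 hi⟩

lemma c_pos (hG : G.IsDRG D b c) {i : ℕ} (hi : i < D) : 0 < c (i + 1) := by
  obtain ⟨x, w, hw⟩ := hG.exists_geodesic
  rw [← hG.c_eq (i + 1) hi x (w (i + 1)) (hw (i + 1) hi).1, card_pos]
  exact ⟨w i, by simpa [(hw i hi.le).1] using ((hw i hi.le).2 hi).symm⟩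

lemma c_one (hG : G.IsDRG D b c) (hD : 1 ≤ D) : c 1 = 1 := by
  obtain ⟨x, w, hw⟩ := hG.exists_geodesic
  have h1 := (hw 1 hD).1
  rw [← hG.c_eq 1 hD x (w 1) h1, card_eq_one]
  refine ⟨x, ?_⟩
  ext z
  have := hG.connected.dist_eq_zero_iff (u := x) (v := z)
  have h2 := dist_eq_one_iff_adj.1 h1
  simp only [mem_filter, mem_neighborFinset, mem_singleton, Nat.add_eq_right, this]
  constructor
  · rintro ⟨-, rfl⟩; rfl
  · rintro rfl; exact ⟨h2.symm, rfl⟩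

/-! ### Intersection numbers -/

/-- The product of the matrix `f (dist x z)` with the `j`-th distance matrix again depends on the
distance only, because the `j`-th distance matrix is a polynomial in the adjacency matrix. -/
lemma distConv_delta (hG : G.IsDRG D b c) (j : ℕ) :
    ∀ f : ℕ → ℝ, ∃ m : ℕ → ℝ, ∀ x y : V, distConv G f (delta j) x y = m (G.dist x y) := by
  induction j using Nat.strong_induction_on with
  | _ j ih =>
  intro f
  by_cases hj : D < j
  · refine ⟨fun _ => 0, fun x y => sum_eq_zero fun z _ => ?_⟩
    have := hG.dist_le z y
    rw [delta, if_neg (by omega), mul_zero]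
  push Not at hj
  rcases j with _ | _ | j
  · refine ⟨f, fun x y => ?_⟩
    simp [distConv, delta, hG.connected.dist_eq_zero_iff]
  · obtain ⟨m, hm⟩ := ih 0 (by omega) (tridiag b c f)
    refine ⟨m, fun x y => ?_⟩
    rw [← hm, hG.distConv_tridiag, hG.tridiag_delta_zero, hG.c_one hj]
    simp
  · obtain ⟨m₁, hm₁⟩ := ih (j + 1) (by omega) (tridiag b c f)
    obtain ⟨m₂, hm₂⟩ := ih (j + 1) (by omega) f
    obtain ⟨m₃, hm₃⟩ := ih j (by omega) f
    have hc : (c (j + 2) : ℝ) ≠ 0 := by exact_mod_cast (hG.c_pos (i := j + 1) (by omega)).ne'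
    refine ⟨fun h => (m₁ h - b j * m₃ h - ((b 0 : ℝ) - b (j + 1) - c (j + 1)) * m₂ h) / c (j + 2),
      fun x y => ?_⟩
    simp only
    rw [eq_div_iff hc, ← hm₁, ← hm₂, ← hm₃, hG.distConv_tridiag, tridiag_delta_succ b c]
    simp only [distConv, mul_sum, sum_mul, ← sum_sub_distrib]
    refine sum_congr rfl fun z _ => ?_
    ring

/-- The intersection numbers `pʰ(i,j)` of a distance-regular graph, as `m i j h`. -/
lemma exists_interNum (hG : G.IsDRG D b c) : ∃ m : ℕ → ℕ → ℕ → ℝ, ∀ i j (x y : V),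
    distConv G (delta i) (delta j) x y = m i j (G.dist x y) := by
  choose m hm using fun i j => hG.distConv_delta j (delta i)
  exact ⟨m, hm⟩

/-- Three-term recurrence for intersection numbers, from multiplying the product of the `i`-th and
`(j + 1)`-st distance matrices by the adjacency matrix. -/
lemma interNum_rec (hG : G.IsDRG D b c) {m : ℕ → ℕ → ℕ → ℝ}
    (hm : ∀ i j (x y : V), distConv G (delta i) (delta j) x y = m i j (G.dist x y))
    (i j : ℕ) (x y : V) :
    tridiag b c (m i (j + 1)) (G.dist x y) = b j * m i j (G.dist x y)
      + ((b 0 : ℝ) - b (j + 1) - c (j + 1)) * m i (j + 1) (G.dist x y)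
      + c (j + 2) * m i (j + 2) (G.dist x y) := by
  rw [← hG.sum_nbr]
  simp only [← hm]
  rw [hG.distConv_nbr, tridiag_delta_succ b c]
  simp only [distConv, mul_sum, ← sum_add_distrib]
  refine sum_congr rfl fun z _ => ?_
  ring

lemma interNum_rec_zero (hG : G.IsDRG D b c) {m : ℕ → ℕ → ℕ → ℝ}
    (hm : ∀ i j (x y : V), distConv G (delta i) (delta j) x y = m i j (G.dist x y))
    (i : ℕ) (x y : V) :
    tridiag b c (m i 0) (G.dist x y) = c 1 * m i 1 (G.dist x y) := by
  rw [← hG.sum_nbr]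
  simp only [← hm]
  rw [hG.distConv_nbr, hG.tridiag_delta_zero]
  simp only [distConv, mul_sum]
  refine sum_congr rfl fun z _ => ?_
  ring

end IsDRG

lemma distConv_symm (i j : ℕ) (x y : V) :
    distConv G (delta i) (delta j) x y = distConv G (delta j) (delta i) y x := by
  unfold distConv
  refine sum_congr rfl fun z _ => ?_
  rw [G.dist_comm (u := x) (v := z), G.dist_comm (u := z) (v := y)]
  ring

lemma distConv_delta_eq_zero (hc : G.Connected) {i j : ℕ} {x y : V} (h : i + G.dist x y < j) :
    distConv G (delta i) (delta j) x y = 0 := by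
  refine sum_eq_zero fun z _ => ?_
  have h1 := hc.dist_triangle (u := z) (v := x) (w := y)
  rw [G.dist_comm (u := z) (v := x)] at h1
  unfold delta
  by_cases h2 : G.dist x z = i
  · rw [if_neg (show G.dist z y ≠ j by omega), mul_zero]
  · rw [if_neg h2, zero_mul]

/-! ### Counting around a quadrangle -/

/-- The pointwise count: `p, q, r, s` are the distances from one vertex to the corners of a
quadrangle, the left side runs over oriented sides and the right side over oriented diagonals. -/
lemma quad_pointwise (n p q r s : ℕ) (h1 : p ≤ q + 1 ∧ q ≤ p + 1) (h2 : q ≤ r + 1 ∧ r ≤ q + 1)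
    (h3 : r ≤ s + 1 ∧ s ≤ r + 1) (h4 : s ≤ p + 1 ∧ p ≤ s + 1) :
    let P : ℕ → ℕ → ℕ → ℕ → ℝ := fun i j u v => delta i u * delta j v
    let S : ℕ → ℕ → ℝ := fun i j => P i j p r + P i j r p + P i j q s + P i j s q
    2 * S n (n + 2) + 2 * S (n + 1) (n + 3) + S (n + 1) (n + 2) ≤
      P (n + 1) (n + 2) p q + P (n + 1) (n + 2) q p + P (n + 1) (n + 2) q r
      + P (n + 1) (n + 2) r q + P (n + 1) (n + 2) r s + P (n + 1) (n + 2) s r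
      + P (n + 1) (n + 2) s p + P (n + 1) (n + 2) p s := by
  intro P S
  -- Distances outside `n, …, n + 3` contribute nothing, so each corner has five cases.
  have key : ∀ u : ℕ,
      (u = n ∧ delta n u = 1 ∧ delta (n + 1) u = 0 ∧ delta (n + 2) u = 0 ∧ delta (n + 3) u = 0) ∨
      (u = n + 1 ∧
        delta n u = 0 ∧ delta (n + 1) u = 1 ∧ delta (n + 2) u = 0 ∧ delta (n + 3) u = 0) ∨
      (u = n + 2 ∧
        delta n u = 0 ∧ delta (n + 1) u = 0 ∧ delta (n + 2) u = 1 ∧ delta (n + 3) u = 0) ∨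
      (u = n + 3 ∧
        delta n u = 0 ∧ delta (n + 1) u = 0 ∧ delta (n + 2) u = 0 ∧ delta (n + 3) u = 1) ∨
      ((u < n ∨ n + 3 < u) ∧
        delta n u = 0 ∧ delta (n + 1) u = 0 ∧ delta (n + 2) u = 0 ∧ delta (n + 3) u = 0) := by
    intro u
    unfold delta
    rcases (by omega : u = n ∨ u = n + 1 ∨ u = n + 2 ∨ u = n + 3 ∨ (u < n ∨ n + 3 < u)) with
      h | h | h | h | h
    · subst h; simp
    · subst h; simp
    · subst h; simp
    · subst h; simp
    · refine Or.inr (Or.inr (Or.inr (Or.inr ⟨h, if_neg ?_, if_neg ?_, if_neg ?_, if_neg ?_⟩))) <;>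
        omega
  simp only [S, P]
  rcases key p with ⟨hp, p0, p1, p2, p3⟩ | ⟨hp, p0, p1, p2, p3⟩ | ⟨hp, p0, p1, p2, p3⟩ |
    ⟨hp, p0, p1, p2, p3⟩ | ⟨hp, p0, p1, p2, p3⟩ <;>
  rcases key q with ⟨hq, q0, q1, q2, q3⟩ | ⟨hq, q0, q1, q2, q3⟩ | ⟨hq, q0, q1, q2, q3⟩ |
    ⟨hq, q0, q1, q2, q3⟩ | ⟨hq, q0, q1, q2, q3⟩ <;>
  first
  | (exfalso; omega)
  | (rcases key r with ⟨hr, r0, r1, r2, r3⟩ | ⟨hr, r0, r1, r2, r3⟩ | ⟨hr, r0, r1, r2, r3⟩ |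
      ⟨hr, r0, r1, r2, r3⟩ | ⟨hr, r0, r1, r2, r3⟩ <;>
    first
    | (exfalso; omega)
    | (rcases key s with ⟨hs, s0, s1, s2, s3⟩ | ⟨hs, s0, s1, s2, s3⟩ | ⟨hs, s0, s1, s2, s3⟩ |
        ⟨hs, s0, s1, s2, s3⟩ | ⟨hs, s0, s1, s2, s3⟩ <;>
      first
      | (exfalso; omega)
      | (simp only [p0, p1, p2, p3, q0, q1, q2, q3, r0, r1, r2, r3, s0, s1, s2, s3]
         norm_num)))

namespace IsDRG

/-- Terwilliger's inequality at level `n + 2`. -/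
lemma terwilliger_step (hG : G.IsDRG D b c) (hquad : G.HasInducedQuadrangle) (n : ℕ)
    (hn : n + 2 ≤ D) :
    ((b 0 : ℝ) - b 1 - 1) + 2 ≤ ((c (n + 2) : ℝ) - b (n + 2)) - ((c (n + 1) : ℝ) - b (n + 1)) := by
  obtain ⟨p, q, r, s, -, hpr, -, -, hqs, -, apq, aqr, ars, asp, npr, nqs⟩ := hquad
  obtain ⟨m, hm⟩ := hG.exists_interNum
  have dist2 : ∀ {x y z : V}, G.Adj x y → G.Adj y z → x ≠ z → ¬ G.Adj x z → G.dist x z = 2 := by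
    intro x y z h1 h2 h3 h4
    have e1 := (hG.dist_cases x h2).1
    rw [dist_eq_one_iff_adj.2 h1] at e1
    have e2 : G.dist x z ≠ 0 := fun h => h3 (hG.connected.dist_eq_zero_iff.1 h)
    have e3 : G.dist x z ≠ 1 := fun h => h4 (dist_eq_one_iff_adj.1 h)
    omega
  have dpr := dist2 apq aqr hpr npr
  have dqs := dist2 aqr ars hqs nqs
  have dpq := dist_eq_one_iff_adj.2 apq
  have dqr := dist_eq_one_iff_adj.2 aqr
  have drs := dist_eq_one_iff_adj.2 ars
  have dsp := dist_eq_one_iff_adj.2 asp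
  have dpp : G.dist p p = 0 := by simp
  have main : 2 * (4 * m n (n + 2) 2) + 2 * (4 * m (n + 1) (n + 3) 2) + 4 * m (n + 1) (n + 2) 2
      ≤ 8 * m (n + 1) (n + 2) 1 := by
    have h := sum_le_sum fun z (_ : z ∈ (univ : Finset V)) =>
      quad_pointwise n (G.dist p z) (G.dist q z) (G.dist r z) (G.dist s z)
        (by have := hG.dist_cases z apq; simpa [G.dist_comm (u := z)] using this.symm)
        (by have := hG.dist_cases z aqr; simpa [G.dist_comm (u := z)] using this.symm)
        (by have := hG.dist_cases z ars; simpa [G.dist_comm (u := z)] using this.symm)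
        (by have := hG.dist_cases z asp; simpa [G.dist_comm (u := z)] using this.symm)
    have conv : ∀ i j (x y : V), ∑ z, delta i (G.dist x z) * delta j (G.dist y z)
        = m i j (G.dist x y) := by
      intro i j x y
      rw [← hm]
      exact sum_congr rfl fun z _ => by rw [G.dist_comm (u := y)]
    simp only [sum_add_distrib, ← mul_sum, conv] at h
    rw [G.dist_comm (u := r) (v := p), G.dist_comm (u := s) (v := q), G.dist_comm (u := q) (v := p),
      G.dist_comm (u := r) (v := q), G.dist_comm (u := s) (v := r), G.dist_comm (u := p) (v := s),
      dpr, dqs, dpq, dqr, drs, dsp] at h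
    linarith
  have c1 := hG.c_one (by omega)
  have van : ∀ {i j : ℕ} (x y : V), i + G.dist x y < j → m i j (G.dist x y) = 0 := by
    intro i j x y h
    rw [← hm, distConv_delta_eq_zero hG.connected h]
  have sym1 : ∀ i j, m i j 1 = m j i 1 := by
    intro i j
    rw [← dpq, ← hm, distConv_symm, hm, G.dist_comm]
  have sym0 : ∀ i j, m i j 0 = m j i 0 := by
    intro i j
    rw [← dpp, ← hm, distConv_symm, hm]
  have van1 : ∀ {i j : ℕ}, i + 1 < j → m i j 1 = 0 := by
    intro i j h; rw [← dpq]; exact van p q (by omega)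
  have van0 : ∀ {i j : ℕ}, i < j → m i j 0 = 0 := by
    intro i j h; rw [← dpp]; exact van p p (by omega)
  -- Recurrences at distance 1 for the three diagonal counts.
  have e1 := hG.interNum_rec hm n (n + 1) p q
  have e2 := hG.interNum_rec hm (n + 1) (n + 2) p q
  have e3 := hG.interNum_rec hm (n + 1) (n + 1) p q
  -- Recurrences at distance 0, relating the side counts to the valency of a distance graph.
  have e4 := hG.interNum_rec hm (n + 1) (n + 1) p p
  have e5 := hG.interNum_rec hm (n + 1) n p p
  have e6 : (b 0 : ℝ) * m (n + 1) n 1 = c (n + 1) * m (n + 1) (n + 1) 0 := by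
    rcases n with _ | n
    · have := hG.interNum_rec_zero hm 1 p p
      simpa [dpp, tridiag, hG.c_zero] using this
    · have := hG.interNum_rec hm (n + 2) n p p
      rw [dpp, sym0 (n + 2) n, van0 (show n < n + 2 by omega), sym0 (n + 2) (n + 1),
        van0 (show n + 1 < n + 2 by omega)] at this
      simp only [tridiag, hG.c_zero, sym0 (n + 2) (n + 1),
        van0 (show n + 1 < n + 2 by omega)] at this
      push_cast at this
      linarith
  rw [dpq] at e1 e2 e3
  rw [dpp] at e4 e5
  simp only [tridiag, c1, hG.c_zero] at e1 e2 e3 e4 e5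
  norm_num at e1 e2 e3 e4 e5
  rw [van0 (show n < n + 2 by omega), van1 (show n + 1 < n + 2 by omega),
    van1 (show n + 1 < n + 3 by omega)] at e1
  rw [van0 (show n + 1 < n + 3 by omega), van1 (show n + 1 + 1 < n + 3 by omega),
    van1 (show n + 1 + 1 < n + 4 by omega)] at e2
  rw [van0 (show n + 1 < n + 2 by omega), van1 (show n + 1 + 1 < n + 3 by omega)] at e3
  rw [van0 (show n + 1 < n + 2 by omega), van0 (show n + 1 < n + 3 by omega)] at e4
  rw [sym0 (n + 1) n, van0 (show n < n + 1 by omega), van0 (show n + 1 < n + 2 by omega)] at e5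
  rw [sym1 (n + 1) n] at e6
  have hk : (0 : ℝ) < b 0 := by exact_mod_cast hG.b_pos (i := 0) (by omega)
  have hb1 : (0 : ℝ) < b 1 := by exact_mod_cast hG.b_pos (i := 1) (by omega)
  have hbn : (0 : ℝ) < b (n + 1) := by exact_mod_cast hG.b_pos (i := n + 1) (by omega)
  have hK : 0 < m (n + 1) (n + 1) 0 := by
    obtain ⟨x, w, hw⟩ := hG.exists_geodesic
    have hx : m (n + 1) (n + 1) 0 = distConv G (delta (n + 1)) (delta (n + 1)) x x := by
      rw [hm]; simp
    rw [hx]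
    refine sum_pos' (fun z _ => ?_) ⟨w (n + 1), mem_univ _, ?_⟩
    · unfold delta; positivity
    · rw [G.dist_comm (u := w (n + 1)), (hw (n + 1) (by omega)).1]; simp [delta]
  generalize m (n + 1) (n + 2) 1 = N at *
  generalize m (n + 1) (n + 1) 0 = K at *
  generalize m (n + 1) (n + 1) 1 = P at *
  generalize m n (n + 1) 1 = N' at *
  generalize m n (n + 2) 2 = Q at *
  generalize m (n + 1) (n + 3) 2 = Q' at *
  generalize m (n + 1) (n + 2) 2 = R at *
  have hN : 0 < N := by
    have : 0 < (b 0 : ℝ) * N := by rw [e4]; nlinarith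
    exact pos_of_mul_pos_right this hk.le
  have f1 : (b (n + 1) : ℝ) * N' = c (n + 1) * N :=
    mul_left_cancel₀ hk.ne' (by linear_combination (b (n + 1) : ℝ) * e6 - (c (n + 1) : ℝ) * e4)
  have f2 : (b (n + 1) : ℝ) * P = ((b 0 : ℝ) - b (n + 1) - c (n + 1)) * N :=
    mul_left_cancel₀ hk.ne' (by
      linear_combination (b (n + 1) : ℝ) * e5 - ((b 0 : ℝ) - b (n + 1) - c (n + 1)) * e4)
  have h := mul_le_mul_of_nonneg_left main hb1.le
  refine le_of_mul_le_mul_right ?_ hN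
  linarith

end IsDRG

end SimpleGraph

theorem terwilliger_diameter_bound {V : Type*} [Fintype V] [DecidableEq V]
    (G : SimpleGraph V) [DecidableRel G.Adj] (D : ℕ) (b c : ℕ → ℕ)
    (hG : G.IsDRG D b c) (hquad : G.HasInducedQuadrangle) :
    (D : ℝ) ≤ ((b 0 : ℝ) + c D) / (((b 0 : ℝ) - b 1 - 1) + 2) ∧
    (D : ℝ) ≤ 2 * (b 0 : ℝ) / (((b 0 : ℝ) - b 1 - 1) + 2) := by
  have hD : 1 ≤ D := by
    obtain ⟨p, q, -, -, -, -, -, -, -, -, h, -⟩ := hquad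
    have := hG.dist_le p q
    rwa [dist_eq_one_iff_adj.2 h] at this
  obtain ⟨x, w, hw⟩ := hG.exists_geodesic
  have hb1 : (b 1 : ℝ) + c 1 ≤ b 0 := by
    have := hG.b_add_c_le x (w 1)
    rw [(hw 1 hD).1] at this
    exact_mod_cast this
  have hcD : (b D : ℝ) + c D ≤ b 0 := by
    have := hG.b_add_c_le x (w D)
    rw [(hw D le_rfl).1] at this
    exact_mod_cast this
  rw [hG.b_last] at hcD
  have hc1 := hG.c_one hD
  rw [hc1] at hb1
  push_cast at hb1 hcD
  have sum : ∀ n, n + 1 ≤ D → ((n + 1 : ℕ) : ℝ) * (((b 0 : ℝ) - b 1 - 1) + 2) ≤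
      b 0 + (c (n + 1) - b (n + 1)) := by
    intro n
    induction n with
    | zero => intro _; rw [hc1]; push_cast; linarith
    | succ n ih =>
      intro h
      have h1 := ih (by omega)
      have h2 := hG.terwilliger_step hquad n h
      push_cast at h1 ⊢
      linarith
  have h := sum (D - 1) (by omega)
  rw [Nat.sub_add_cancel hD, hG.b_last] at h
  push_cast at h
  have hpos : 0 < ((b 0 : ℝ) - b 1 - 1) + 2 := by linarith
  rw [le_div_iff₀ hpos, le_div_iff₀ hpos]
  constructor <;> linarith
end

section
/- Let Γ be a Taylor graph (an antipodal 2-cover of diameter 3) with a₁ ≥ 2, and suppose for some vertex x the second largest eigenvalue of the local graph Δ(x) is at most 1. Then the complement of Δ(x) is a non-complete connected strongly regular graph with smallest eigenvalue at least −2 that is not a union of cliques, and hence Δ(x) has k ∈ {5, 9, 15, 27} vertices, i.e., Γ has intersection array {5,2,1;1,2,5}, {9,4,1;1,4,9}, {15,8,1;1,8,15}, or {27,16,1;1,16,27}. -/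
/-!
Every vertex `y` of a Taylor graph has a unique antipode `y'` at distance three, and a vertex other
than `y, y'` is adjacent to exactly one of them. Counting the common neighbours of two vertices of
the local graph `Δ(x)` by means of antipodes shows that `Δ(x)` is strongly regular with parameters
`(k, a, l, μ)`, where `a = 2 μ` and `k = 6 μ - 1 - 2 l` (`localGraph_isSRG`).

The nontrivial eigenvalues `r > 0 > s` of `Δ(x)` are the roots of `X² - (l - μ) X - μ`, whose value
at `1` is `1 - l`; so the eigenvalue hypothesis says `l ≤ 1` (`lambda_le_one`). Rather than the
classification of the strongly regular graphs with smallest eigenvalue at least `-2`, the proof uses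
a Krein condition: if `N` is a positive multiple of the projection onto the `s`-eigenspace, then the
sum of the cubes of the entries of `N` is a nonnegative multiple of a sum of squares
(`sum_cube_nonneg`, `krein`).

* For `l = 0` this leaves only `μ = 1`, the pentagon (`mu_eq_one`).
* For `l = 1` it gives `μ ≤ 5`. The value `μ = 4` is excluded because the multiplicity of `s` would
  be `28 / 5`, and `μ = 1` because it would give `m = 0`; the values `2, 3, 5` remain (`mu_mem`).

The bound `-2` on the eigenvalues of the complement comes from the fact that a sum-zero eigenvector
of `Δ(x)` for `θ` is one of the complement for `-1 - θ` (`neg_two_le_eigenvalue`).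
-/

open SimpleGraph Finset

/-! ### Strongly regular graphs with `a = 2 μ` and second eigenvalue at most one -/

section Core

open scoped Matrix

set_option linter.unusedSectionVars false

variable {W : Type*} [Fintype W] [DecidableEq W]

/-- The all-ones matrix. -/
def allOnes (W : Type*) : Matrix W W ℝ := Matrix.of fun _ _ => 1

/-- A positive multiple of a projection has a nonnegative sum of entrywise cubes: writing each entry
as an inner product of rows turns the sum into a sum of squares. This replaces the Schur product
theorem in the Krein condition. -/
lemma sum_cube_nonneg {N : Matrix W W ℝ} (hs : N.IsSymm) {c : ℝ} (hc : 0 < c)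
    (hN : N * N = c • N) : 0 ≤ ∑ x, ∑ y, N x y ^ 3 := by
  have key : c ^ 3 * ∑ x, ∑ y, N x y ^ 3 =
      ∑ i, ∑ j, ∑ l, (∑ x, N x i * N x j * N x l) ^ 2 := by
    have h1 : ∀ x y, c * N x y = ∑ i, N x i * N y i := by
      intro x y
      have := congrFun (congrFun hN x) y
      rw [Matrix.mul_apply, Matrix.smul_apply, smul_eq_mul] at this
      rw [← this]
      exact Finset.sum_congr rfl fun i _ => by rw [hs.apply i y]
    have h2 : ∀ x y, c ^ 3 * N x y ^ 3 =
        ∑ i, ∑ j, ∑ l, (N x i * N x j * N x l) * (N y i * N y j * N y l) := by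
      intro x y
      rw [← mul_pow, h1, pow_succ, pow_two, Finset.sum_mul_sum, Finset.sum_mul]
      refine Finset.sum_congr rfl fun i _ => ?_
      rw [Finset.sum_mul]
      refine Finset.sum_congr rfl fun j _ => ?_
      rw [Finset.mul_sum]
      exact Finset.sum_congr rfl fun l _ => by ring
    have h3 : ∀ i j l, (∑ x, N x i * N x j * N x l) ^ 2 =
        ∑ x, ∑ y, (N x i * N x j * N x l) * (N y i * N y j * N y l) := by
      intro i j l
      rw [pow_two, Finset.sum_mul_sum]
    simp_rw [Finset.mul_sum, h2, h3]
    have h4 : ∀ f : W → W → W → W → W → ℝ, ∑ x, ∑ y, ∑ i, ∑ j, ∑ l, f x y i j l =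
        ∑ i, ∑ j, ∑ l, ∑ x, ∑ y, f x y i j l := by
      intro f
      have := Finset.sum_comm (s := (Finset.univ : Finset (W × W)))
        (t := (Finset.univ : Finset (W × W × W))) (f := fun p t => f p.1 p.2 t.1 t.2.1 t.2.2)
      simpa only [Fintype.sum_prod_type] using this
    exact h4 _
  have h0 : 0 ≤ c ^ 3 * ∑ x, ∑ y, N x y ^ 3 := by
    rw [key]; positivity
  exact nonneg_of_mul_nonneg_right h0 (by positivity)

/-- The trace of a projection is its rank, hence a natural number. -/
lemma trace_idempotent_nat {M : Matrix W W ℝ} (hM : M * M = M) : ∃ n : ℕ, M.trace = n := by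
  have h : IsIdempotentElem (Matrix.toLin' M) := by
    rw [IsIdempotentElem, Module.End.mul_eq_comp, ← Matrix.toLin'_mul, hM]
  refine ⟨Module.finrank ℝ (LinearMap.range (Matrix.toLin' M)), ?_⟩
  rw [← Matrix.trace_toLin'_eq]
  exact (LinearMap.IsIdempotentElem.isProj_range _ h).trace

/-- Eigenvectors of a symmetric matrix for different eigenvalues are orthogonal. -/
lemma inner_eq_zero_of_eigen {A : Matrix W W ℝ} (hA : A.IsHermitian) {w : W → ℝ} {τ : ℝ}
    (hw : A *ᵥ w = τ • w) {j : W} (hj : hA.eigenvalues j ≠ τ) :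
    inner ℝ (hA.eigenvectorBasis j) (WithLp.toLp 2 w) = 0 := by
  have h1 := hA.mulVec_eigenvectorBasis j
  set e : W → ℝ := ⇑(hA.eigenvectorBasis j) with he
  have h2 : (A *ᵥ e) ⬝ᵥ w = e ⬝ᵥ (A *ᵥ w) := by
    rw [Matrix.dotProduct_mulVec, ← Matrix.mulVec_transpose]
    congr 2
    exact hA.symm
  rw [h1, hw, smul_dotProduct, dotProduct_smul, smul_eq_mul, smul_eq_mul] at h2
  have h3 : e ⬝ᵥ w = 0 := by
    have : (hA.eigenvalues j - τ) * (e ⬝ᵥ w) = 0 := by linarith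
    rcases mul_eq_zero.1 this with h | h
    · exact absurd (by linarith) hj
    · exact h
  rw [← h3, EuclideanSpace.inner_eq_star_dotProduct, dotProduct_comm]
  rfl

/-- The useful form of the hypothesis on the second largest eigenvalue. The constant vector has
eigenvalue `a > 1`, so it spans the line of the exceptional basis eigenvector, as would `u` if
`1 < θ`; but `u` is orthogonal to it. -/
lemma eigenvalue_le_one (H : SimpleGraph W) [DecidableRel H.Adj] {a : ℕ}
    (hreg : H.IsRegularOfDegree a) (ha : 2 ≤ a)
    (hx : Matrix.SecondEigLE (H.adjMatrix ℝ) 1) {u : W → ℝ} {θ : ℝ}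
    (hu : H.adjMatrix ℝ *ᵥ u = θ • u) (h0 : u ≠ 0) (h1 : ∑ w, u w = 0) : θ ≤ 1 := by
  by_contra! hθ
  have hA : (H.adjMatrix ℝ).IsHermitian := H.isSymm_adjMatrix
  obtain ⟨i, hi⟩ := hx hA
  have key : ∀ (w : W → ℝ) (τ : ℝ), 1 < τ → H.adjMatrix ℝ *ᵥ w = τ • w →
      ∃ α : ℝ, w = α • ⇑(hA.eigenvectorBasis i) := by
    intro w τ hτ hw
    have hs := hA.eigenvectorBasis.sum_repr' (WithLp.toLp 2 w)
    rw [Finset.sum_eq_single i] at hs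
    · refine ⟨inner ℝ (hA.eigenvectorBasis i) (WithLp.toLp 2 w), ?_⟩
      have := congrArg WithLp.ofLp hs
      exact this.symm
    · intro j _ hj
      rw [inner_eq_zero_of_eigen hA hw (by have := hi j hj; intro h; linarith), zero_smul]
    · simp
  obtain ⟨α, hα⟩ := key u θ hθ hu
  obtain ⟨β, hβ⟩ := key (fun _ => 1) a (by exact_mod_cast ha) (by
    ext v
    have := H.adjMatrix_mulVec_const_apply_of_regular (a := (1 : ℝ)) hreg (v := v)
    simpa [Function.const_def] using this)
  have hne : ∃ v, u v ≠ 0 := by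
    by_contra! h; exact h0 (funext h)
  obtain ⟨v, hv⟩ := hne
  have e1 : ∀ w, u w = α * hA.eigenvectorBasis i w := fun w => congrFun hα w
  have e2 : ∀ w, (1 : ℝ) = β * hA.eigenvectorBasis i w := fun w => congrFun hβ w
  have e3 : ∀ w, β * u w = α := by
    intro w; rw [e1 w]; linear_combination -α * e2 w
  have e4 : ∑ w : W, α = 0 := by
    rw [← Finset.sum_congr rfl fun w _ => e3 w, ← Finset.mul_sum, h1, mul_zero]
  have : Nonempty W := ⟨v⟩
  simp only [Finset.sum_const, nsmul_eq_mul, mul_eq_zero, Nat.cast_eq_zero, Finset.card_univ, Fintype.card_ne_zero, false_or] at e4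
  exact hv (by rw [e1, e4, zero_mul])

variable (H : SimpleGraph W) [DecidableRel H.Adj]

/-- The matrix `A - θ I - y J`, for `A` the adjacency matrix of `H`. When `θ` and `σ` are the two
eigenvalues of a strongly regular graph other than the valency `a`, and `y = (a - θ) / k`, it is
`σ - θ` times the orthogonal projection onto the `σ`-eigenspace inside the sum-zero vectors. -/
def shiftedAdj (θ y : ℝ) : Matrix W W ℝ := H.adjMatrix ℝ - θ • 1 - y • allOnes W

lemma shiftedAdj_apply (θ y : ℝ) (u v : W) :
    shiftedAdj H θ y u v = (if H.Adj u v then 1 else 0) - (if u = v then θ else 0) - y := by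
  simp [shiftedAdj, allOnes, Matrix.one_apply]

lemma shiftedAdj_isSymm (θ y : ℝ) : (shiftedAdj H θ y).IsSymm := by
  ext u v
  simp [shiftedAdj_apply, Matrix.transpose_apply, H.adj_comm, eq_comm]

variable {H} {k a l μ : ℕ}

lemma adj_mul_allOnes (h : H.IsRegularOfDegree a) :
    H.adjMatrix ℝ * allOnes W = (a : ℝ) • allOnes W := by
  ext u v
  simp [allOnes, adjMatrix_mul_apply, h.degree_eq]

lemma allOnes_mul_adj (h : H.IsRegularOfDegree a) :
    allOnes W * H.adjMatrix ℝ = (a : ℝ) • allOnes W := by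
  ext u v
  simp [allOnes, mul_adjMatrix_apply, h.degree_eq]

lemma allOnes_mul_allOnes (h : Fintype.card W = k) :
    allOnes W * allOnes W = (k : ℝ) • allOnes W := by
  ext u v
  simp [allOnes, Matrix.mul_apply, h]

lemma adj_sq (h : H.IsSRGWith k a l μ) (ha : a = 2 * μ) :
    H.adjMatrix ℝ * H.adjMatrix ℝ =
      (μ : ℝ) • 1 + ((l : ℝ) - μ) • H.adjMatrix ℝ + (μ : ℝ) • allOnes W := by
  have h1 := h.matrix_eq (α := ℝ)
  simp only [pow_two, ← Nat.cast_smul_eq_nsmul ℝ] at h1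
  rw [h1]
  ext u v
  simp only [Matrix.add_apply, Matrix.smul_apply, adjMatrix_apply, compl_adj, Matrix.one_apply,
    allOnes, Matrix.of_apply, smul_eq_mul, ha]
  push_cast
  by_cases huv : u = v
  · subst huv; simp; ring
  · by_cases hadj : H.Adj u v <;> simp [huv, hadj]

/-- Each column of `A - θ I - y J` is an eigenvector of `A` for the other eigenvalue `σ`, where `θ`
and `σ` are the roots of `X² - (l - μ) X - μ`. -/
lemma adj_mul_shiftedAdj (h : H.IsSRGWith k a l μ) (ha : a = 2 * μ) (hk : k + 2 * l + 1 = 6 * μ)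
    {θ σ y : ℝ} (hsum : θ + σ = l - μ) (hprod : θ * σ = -μ) (hy : y * k = a - θ) :
    H.adjMatrix ℝ * shiftedAdj H θ y = σ • shiftedAdj H θ y := by
  have hk0 : (k : ℝ) ≠ 0 := by
    rintro h0
    have : k = 0 := by exact_mod_cast h0
    omega
  have ha' : (a : ℝ) = 2 * μ := by exact_mod_cast ha
  have hk' : (k : ℝ) + 2 * l + 1 = 6 * μ := by exact_mod_cast hk
  have hJ : (μ : ℝ) - y * a = -(σ * y) := by
    apply mul_right_cancel₀ hk0
    have e : (y * k) * (a - σ) = (a - θ) * (a - σ) := by rw [hy]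
    have e2 : ((a : ℝ) - θ) * (a - σ) = μ * k := by
      rw [ha']
      linear_combination (-2 * μ : ℝ) * hsum + hprod - (μ : ℝ) * hk'
    linear_combination -e - e2
  rw [shiftedAdj, Matrix.mul_sub, Matrix.mul_sub, Matrix.mul_smul, Matrix.mul_smul, Matrix.mul_one,
    adj_mul_allOnes h.regular, adj_sq h ha]
  ext u v
  simp only [Matrix.add_apply, Matrix.sub_apply, Matrix.smul_apply, smul_eq_mul, allOnes,
    Matrix.of_apply]
  linear_combination ((1 : Matrix W W ℝ) u v) * hprod - (H.adjMatrix ℝ u v) * hsum + hJ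

lemma allOnes_mul_shiftedAdj (h : H.IsSRGWith k a l μ) {θ y : ℝ} (hy : y * k = a - θ) :
    allOnes W * shiftedAdj H θ y = 0 := by
  rw [shiftedAdj, Matrix.mul_sub, Matrix.mul_sub, Matrix.mul_smul, Matrix.mul_smul, Matrix.mul_one,
    allOnes_mul_adj h.regular, allOnes_mul_allOnes h.card]
  ext u v
  simp only [Matrix.sub_apply, Matrix.smul_apply, smul_eq_mul, allOnes,
    Matrix.of_apply, Matrix.zero_apply]
  linear_combination -hy

lemma shiftedAdj_sq (h : H.IsSRGWith k a l μ) (ha : a = 2 * μ) (hk : k + 2 * l + 1 = 6 * μ)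
    {θ σ y : ℝ} (hsum : θ + σ = l - μ) (hprod : θ * σ = -μ) (hy : y * k = a - θ) :
    (-shiftedAdj H θ y) * (-shiftedAdj H θ y) = (θ - σ) • (-shiftedAdj H θ y) := by
  rw [neg_mul_neg]
  conv_lhs => enter [1]; rw [shiftedAdj]
  rw [Matrix.sub_mul, Matrix.sub_mul, Matrix.smul_mul, Matrix.smul_mul, Matrix.one_mul,
    adj_mul_shiftedAdj h ha hk hsum hprod hy, allOnes_mul_shiftedAdj h hy]
  module

lemma sum_cube_shiftedAdj (h : H.IsSRGWith k a l μ) (θ y : ℝ) :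
    ∑ u, ∑ v, (-shiftedAdj H θ y) u v ^ 3 =
      k * (k * y ^ 3 + ((θ + y) ^ 3 - y ^ 3) + a * ((y - 1) ^ 3 - y ^ 3)) := by
  have h1 : ∀ u v, (-shiftedAdj H θ y) u v ^ 3 = y ^ 3 + (if u = v then (θ + y) ^ 3 - y ^ 3 else 0)
      + ((y - 1) ^ 3 - y ^ 3) * (if H.Adj u v then 1 else 0) := by
    intro u v
    rw [Matrix.neg_apply, shiftedAdj_apply]
    by_cases huv : u = v
    · subst huv; simp; ring
    · by_cases hadj : H.Adj u v <;> simp [huv, hadj]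
  have h2 : ∀ u, ∑ v, (if H.Adj u v then (1 : ℝ) else 0) = a := by
    intro u
    rw [Finset.sum_boole, ← neighborFinset_eq_filter, card_neighborFinset_eq_degree,
      h.regular.degree_eq]
  simp_rw [h1, Finset.sum_add_distrib, ← Finset.mul_sum, h2]
  simp [h.card]
  ring

/-- A Krein condition: the sum of the entrywise cubes of the (scaled) projection onto the eigenspace
of the smaller eigenvalue `σ` is nonnegative. -/
lemma krein (h : H.IsSRGWith k a l μ) (ha : a = 2 * μ) (hk : k + 2 * l + 1 = 6 * μ)
    {θ σ y : ℝ} (hsum : θ + σ = l - μ) (hprod : θ * σ = -μ) (hy : y * k = a - θ) (hlt : σ < θ) :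
    0 ≤ k * y ^ 3 + ((θ + y) ^ 3 - y ^ 3) + a * ((y - 1) ^ 3 - y ^ 3) := by
  have h1 := sum_cube_nonneg (N := -shiftedAdj H θ y)
    (by rw [Matrix.IsSymm, Matrix.transpose_neg, (shiftedAdj_isSymm H θ y).eq])
    (sub_pos.2 hlt) (shiftedAdj_sq h ha hk hsum hprod hy)
  rw [sum_cube_shiftedAdj h] at h1
  have hk0 : (0 : ℝ) < k := by
    have : 0 < k := by omega
    exact_mod_cast this
  exact nonneg_of_mul_nonneg_right h1 hk0

/-- The polynomial `X² - (l - μ) X - μ` takes the value `1 - l` at `1`, so `2 ≤ l` would give a root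
larger than `1`, and a column of `A - s I - y J` would be a sum-zero eigenvector for it. -/
lemma lambda_le_one (h : H.IsSRGWith k a l μ) (ha : a = 2 * μ) (hk : k + 2 * l + 1 = 6 * μ)
    (hμ : 1 ≤ μ) (hka : a + 2 ≤ k) (hx : Matrix.SecondEigLE (H.adjMatrix ℝ) 1) : l ≤ 1 := by
  by_contra! hl
  have hl' : (2 : ℝ) ≤ l := by exact_mod_cast hl
  have hμ' : (1 : ℝ) ≤ μ := by exact_mod_cast hμ
  -- the two roots of `X² - (l - μ) X - μ`
  set D : ℝ := ((l : ℝ) - μ) ^ 2 + 4 * μ with hD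
  have hD0 : 0 ≤ D := by positivity
  have hsq := Real.sq_sqrt hD0
  set q := √D
  have hq : 0 ≤ q := Real.sqrt_nonneg _
  set r : ℝ := (l - μ + q) / 2 with hr
  set s : ℝ := (l - μ - q) / 2 with hs
  have hr1 : 1 < r := by
    by_contra! hle
    have : q ≤ 2 - l + μ := by linarith
    nlinarith
  have hk0 : (k : ℝ) ≠ 0 := by
    have : k ≠ 0 := by omega
    exact_mod_cast this
  set y : ℝ := (a - s) / k with hy
  have hy' : y * k = a - s := by rw [hy]; field_simp
  have hsum : s + r = l - μ := by rw [hr, hs]; ring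
  have hprod : s * r = -μ := by rw [hr, hs]; linear_combination (-1 / 4) * hsq + (1 / 4) * hD
  have hAB := adj_mul_shiftedAdj h ha hk hsum hprod hy'
  have hJB := allOnes_mul_shiftedAdj h hy'
  have hne : Nonempty W := by
    rw [← Fintype.card_pos_iff, h.card]; omega
  obtain ⟨v⟩ := hne
  -- a nonzero column would be a sum-zero eigenvector for `r > 1`
  have hcol : (fun u => shiftedAdj H s y u v) = 0 := by
    by_contra h0
    refine absurd (eigenvalue_le_one H h.regular (by omega) hx (u := fun u => shiftedAdj H s y u v)
      (θ := r) ?_ h0 ?_) (by linarith)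
    · ext u
      exact congrFun (congrFun hAB u) v
    · have := congrFun (congrFun hJB v) v
      simpa [allOnes, Matrix.mul_apply] using this
  have hentry : ∀ u, shiftedAdj H s y u v = 0 := fun u => congrFun hcol u
  have hdeg := h.regular.degree_eq v
  obtain ⟨w, hw⟩ : ∃ w, H.Adj v w := by
    have : 0 < H.degree v := by omega
    exact (H.degree_pos_iff_exists_adj v).1 this
  obtain ⟨z, hz⟩ : ∃ z, Hᶜ.Adj v z := by
    have : 0 < Hᶜ.degree v := by rw [h.compl.regular.degree_eq]; omega
    exact (Hᶜ.degree_pos_iff_exists_adj v).1 this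
  -- a vanishing column has equal entries `1 - y = 0` and `-y = 0`
  rw [compl_adj] at hz
  have e1 := hentry w
  have e2 := hentry z
  rw [shiftedAdj_apply, if_pos hw.symm, if_neg hw.ne'] at e1
  rw [shiftedAdj_apply, if_neg (fun h => hz.2 h.symm), if_neg (Ne.symm hz.1)] at e2
  linarith

/-- In the triangle-free case the Krein condition reads `9 μ + 1 ≤ r (9 μ + 6)` for the positive root
`r` as soon as `2 ≤ μ`, which contradicts `r² + μ r = μ`. -/
lemma mu_eq_one (h : H.IsSRGWith k a 0 μ) (ha : a = 2 * μ) (hk : k + 1 = 6 * μ)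
    (hμ : 1 ≤ μ) : μ = 1 := by
  by_contra hne
  have hμ' : (2 : ℝ) ≤ μ := by
    have : 2 ≤ μ := by omega
    exact_mod_cast this
  have ha' : (a : ℝ) = 2 * μ := by exact_mod_cast ha
  have hk' : (k : ℝ) = 6 * μ - 1 := by
    have : (k : ℝ) + 1 = 6 * μ := by exact_mod_cast hk
    linarith
  set M : ℝ := (μ : ℝ)
  set D : ℝ := M ^ 2 + 4 * M with hD
  have hD0 : 0 ≤ D := by positivity
  have hsq := Real.sq_sqrt hD0
  have hq : 0 < √D := Real.sqrt_pos.2 (by positivity)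
  set q := √D
  obtain ⟨r, hr⟩ : ∃ r : ℝ, r = (-M + q) / 2 := ⟨_, rfl⟩
  have hroot : r ^ 2 = M - M * r := by rw [hr]; linear_combination (1 / 4) * hsq + (1 / 4) * hD
  have hqM : M < q := by nlinarith
  have hk0 : 0 < 6 * M - 1 := by linarith
  obtain ⟨y, hy⟩ : ∃ y : ℝ, y * (6 * M - 1) = 2 * M - r := 
    ⟨(2 * M - r) / (6 * M - 1), div_mul_cancel₀ _ hk0.ne'⟩
  have hK := krein h ha (by omega) (θ := r) (σ := -M - r) (y := y) (by push_cast; ring)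
    (by linear_combination -hroot) (by rw [hk', ha', hy]) (by linarith)
  rw [hk', ha'] at hK
  -- clearing denominators and reducing modulo `hroot` leaves an expression linear in `r`
  have hF : (6 * M - 1) ^ 3 * ((6 * M - 1) * y ^ 3 + ((r + y) ^ 3 - y ^ 3) + 2 * M * ((y - 1) ^ 3 - y ^ 3))
      = 2 * M * (M - 1) * (6 * M - 1) * (2 * M - 1) * (r * (9 * M + 6) - (9 * M + 1)) := by
    have e : (6 * M - 1) ^ 3 * ((6 * M - 1) * y ^ 3 + ((r + y) ^ 3 - y ^ 3) + 2 * M * ((y - 1) ^ 3 - y ^ 3))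
      = (6 * M - 2 - 2 * M) * (y * (6 * M - 1)) ^ 3 + (r * (6 * M - 1) + y * (6 * M - 1)) ^ 3
        + 2 * M * (y * (6 * M - 1) - (6 * M - 1)) ^ 3 := by ring
    rw [e, hy]
    have hc : r ^ 3 = M * r - M * (M - M * r) := by
      linear_combination r * hroot - M * hroot
    ring_nf
    rw [hc, hroot]
    ring
  -- multiply `9 M + 1 ≤ r (9 M + 6)` by the same bound for `r + M`, and use `r (r + M) = M`
  have hneg : r * (9 * M + 6) < 9 * M + 1 := by
    by_contra! hle
    have h1 : (9 * M + 1) * ((9 * M + 1) + M * (9 * M + 6)) ≤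
        (r * (9 * M + 6)) * (r * (9 * M + 6) + M * (9 * M + 6)) := by
      apply mul_le_mul hle (by linarith) (by positivity)
      linarith
    have h2 : (r * (9 * M + 6)) * (r * (9 * M + 6) + M * (9 * M + 6)) = M * (9 * M + 6) ^ 2 := by
      linear_combination (9 * M + 6) ^ 2 * hroot
    nlinarith [sq_nonneg (6 * M - 1)]
  have h3 : 0 < 2 * M * (M - 1) * (6 * M - 1) * (2 * M - 1) := by
    have : 0 < M - 1 := by linarith
    have : 0 < 2 * M - 1 := by linarith
    positivity
  have h4 : 0 ≤ 2 * M * (M - 1) * (6 * M - 1) * (2 * M - 1) * (r * (9 * M + 6) - (9 * M + 1)) := by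
    rw [← hF]; positivity
  nlinarith

/-- For `l = 1` the eigenvalues are `1` and `-μ`. The Krein condition gives `μ ≤ 5`, and for `μ = 4`
the eigenvalue `-4` would have multiplicity `28 / 5`. -/
lemma mu_mem (h : H.IsSRGWith k a 1 μ) (ha : a = 2 * μ) (hk : k + 3 = 6 * μ)
    (hμ : 2 ≤ μ) : μ = 2 ∨ μ = 3 ∨ μ = 5 := by
  have ha' : (a : ℝ) = 2 * μ := by exact_mod_cast ha
  have hk' : (k : ℝ) = 6 * μ - 3 := by
    have : (k : ℝ) + 3 = 6 * μ := by exact_mod_cast hk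
    linarith
  have hμ' : (2 : ℝ) ≤ μ := by exact_mod_cast hμ
  have hsum : (1 : ℝ) + -μ = (1 : ℕ) - μ := by push_cast; ring
  have hprod : (1 : ℝ) * -μ = -μ := by ring
  have hy : (1 / 3 : ℝ) * k = a - 1 := by rw [hk', ha']; ring
  have hK := krein h ha hk hsum hprod hy (by linarith)
  rw [hk', ha'] at hK
  have h5 : (μ : ℝ) ≤ 5 := by norm_num at hK; linarith
  have h5' : μ ≤ 5 := by exact_mod_cast h5
  have h4 : μ ≠ 4 := by
    rintro rfl
    have hsq := shiftedAdj_sq h ha hk hsum hprod hy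
    obtain ⟨n, hn⟩ := trace_idempotent_nat (M := (1 / 5 : ℝ) • (-shiftedAdj H 1 (1 / 3))) (by
      rw [Matrix.smul_mul, Matrix.mul_smul, hsq, smul_smul, smul_smul]
      congr 1
      norm_num)
    have ht : ((1 / 5 : ℝ) • (-shiftedAdj H 1 (1 / 3))).trace = 28 / 5 := by
      have hc : Fintype.card W = 21 := by rw [h.card]; omega
      simp [Matrix.trace, Matrix.neg_apply, shiftedAdj_apply, hc]
      norm_num
    rw [ht] at hn
    have : (28 : ℝ) = ((5 * n : ℕ) : ℝ) := by push_cast; linarith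
    have : 28 = 5 * n := by exact_mod_cast this
    omega
  omega

/-- An eigenvector of the complement for `η < -2` has sum zero, hence is an eigenvector of `H` for
`-1 - η > 1`. -/
lemma neg_two_le_eigenvalue (hreg : H.IsRegularOfDegree a) (ha : 2 ≤ a)
    (hx : Matrix.SecondEigLE (H.adjMatrix ℝ) 1) (hA : (Hᶜ.adjMatrix ℝ).IsHermitian) (j : W) :
    -2 ≤ hA.eigenvalues j := by
  by_contra! hlt
  have h1 := hA.mulVec_eigenvectorBasis j
  have hn := hA.eigenvectorBasis.orthonormal.ne_zero j
  set η := hA.eigenvalues j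
  set u : W → ℝ := ⇑(hA.eigenvectorBasis j) with hu
  have hu0 : u ≠ 0 := by
    intro h0; apply hn; ext w; exact congrFun h0 w
  have hAu : ∀ v, (Hᶜ.adjMatrix ℝ *ᵥ u) v = η * u v := fun v => congrFun h1 v
  -- `u` is orthogonal to the constant vector, which has a nonnegative eigenvalue
  have hsum : ∑ w, u w = 0 := by
    have hc : ∑ v, (Hᶜ.adjMatrix ℝ *ᵥ u) v = (Fintype.card W - 1 - a : ℕ) * ∑ w, u w := by
      simp only [Matrix.mulVec, dotProduct]
      rw [Finset.sum_comm, Finset.mul_sum]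
      refine Finset.sum_congr rfl fun w _ => ?_
      rw [← Finset.sum_mul]
      congr 1
      simp only [adjMatrix_apply]
      rw [Finset.sum_boole]
      simp_rw [Hᶜ.adj_comm _ w]
      rw [← neighborFinset_eq_filter, card_neighborFinset_eq_degree, hreg.compl.degree_eq]
    rw [Finset.sum_congr rfl fun v _ => hAu v, ← Finset.mul_sum] at hc
    have : ((Fintype.card W - 1 - a : ℕ) - η) * ∑ w, u w = 0 := by linarith
    rcases mul_eq_zero.1 this with h | h
    · have : (0 : ℝ) ≤ (Fintype.card W - 1 - a : ℕ) := Nat.cast_nonneg _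
      linarith
    · exact h
  have hAu2 : H.adjMatrix ℝ *ᵥ u = (-1 - η) • u := by
    ext v
    have e : (H.adjMatrix ℝ *ᵥ u) v + (Hᶜ.adjMatrix ℝ *ᵥ u) v + u v = ∑ w, u w := by
      have : u v = ∑ w, (if v = w then 1 else 0) * u w := by simp
      conv_lhs => enter [2]; rw [this]
      simp only [Matrix.mulVec, dotProduct, ← Finset.sum_add_distrib]
      refine Finset.sum_congr rfl fun w _ => ?_
      simp only [adjMatrix_apply, compl_adj]
      by_cases huv : v = w
      · subst huv; simp
      · by_cases hadj : H.Adj v w <;> simp [huv, hadj]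
    rw [hAu, hsum] at e
    simp only [Pi.smul_apply, smul_eq_mul]
    linarith
  have := eigenvalue_le_one H hreg ha hx hAu2 hu0 hsum
  linarith

lemma connected_of_isSRGWith {p q : ℕ} (h : H.IsSRGWith k a p q) (hk : 0 < k) (hq : 0 < q) :
    H.Connected := by
  have : Nonempty W := by rw [← Fintype.card_pos_iff, h.card]; exact hk
  refine ⟨fun u v => ?_⟩
  by_cases huv : u = v
  · subst huv; rfl
  by_cases hadj : H.Adj u v
  · exact hadj.reachable
  have h1 := h.of_not_adj huv hadj
  have : 0 < Fintype.card (H.commonNeighbors u v) := by omega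
  obtain ⟨w, hw⟩ := Fintype.card_pos_iff.1 this
  exact hw.1.reachable.trans hw.2.symm.reachable

end Core

/-! ### Antipodes and local graphs of Taylor graphs -/

section Taylor

variable {V : Type*} [Fintype V] [DecidableEq V] {G : SimpleGraph V} [DecidableRel G.Adj]
  {k m : ℕ} {b c : ℕ → ℕ}

lemma isRegular_of_isDRG (hG : G.IsDRG 3 b c) (hb0 : b 0 = k) : G.IsRegularOfDegree k := by
  intro y
  rw [← hb0, ← hG.b_eq 0 (by omega) y y (by simp), ← card_neighborFinset_eq_degree]
  congr 1
  ext z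
  simp only [mem_neighborFinset, Finset.mem_filter, zero_add, dist_eq_one_iff_adj, and_self]

/-- Double counting of the edges between consecutive spheres around `x`. -/
lemma card_sphere_mul (hG : G.IsDRG 3 b c) (x : V) {i : ℕ} (hi : i < 3) :
    #{y | G.dist x y = i} * b i = #{y | G.dist x y = i + 1} * c (i + 1) := by
  apply Finset.card_mul_eq_card_mul G.Adj
  · intro y hy
    rw [← hG.b_eq i (by omega) x y (by simpa using hy)]
    congr 1
    ext z
    simp [Finset.bipartiteAbove, and_comm]
  · intro y hy
    rw [← hG.c_eq (i + 1) (by omega) x y (by simpa using hy)]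
    congr 1
    ext z
    simp [Finset.bipartiteBelow, and_comm, G.adj_comm]

lemma m_pos (hG : G.IsDRG 3 b c) (hc2 : c 2 = m) (hc3 : c 3 = k)
    (hk : 0 < k) : 0 < m := by
  obtain ⟨x, y, hxy⟩ := hG.exists_dist
  have h1 := hG.c_eq 3 le_rfl x y hxy
  obtain ⟨z, hz⟩ := Finset.card_pos.1 (by rw [h1, hc3]; exact hk)
  have hz2 : G.dist x z = 2 := by
    have := (Finset.mem_filter.1 hz).2
    omega
  rw [← hc2, ← hG.c_eq 2 (by omega) x z hz2, Finset.card_pos]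
  obtain ⟨p, hp⟩ := hG.connected.exists_walk_length_eq_dist x z
  rw [hz2] at hp
  match p, hp with
  | .cons h (.cons h' .nil), _ =>
    exact ⟨_, Finset.mem_filter.2 ⟨(mem_neighborFinset _ _ _).2 h'.symm, by
      rw [dist_eq_one_iff_adj.2 h]⟩⟩

/-- The sphere of radius `3` around each vertex is a single vertex, its antipode. -/
lemma exists_antipode (hG : G.IsDRG 3 b c) (hb0 : b 0 = k) (hb1 : b 1 = m) (hb2 : b 2 = 1)
    (hc1 : c 1 = 1) (hc2 : c 2 = m) (hc3 : c 3 = k) (hk : 0 < k) :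
    ∃ anti : V → V, ∀ y z, G.dist y z = 3 ↔ z = anti y := by
  have hm := m_pos hG hc2 hc3 hk
  have h : ∀ y, ∃ y', ∀ z, G.dist y z = 3 ↔ z = y' := by
    intro y
    have h0 : #{z | G.dist y z = 0} = 1 := by
      rw [Finset.card_eq_one]
      refine ⟨y, ?_⟩
      ext z
      simp [hG.connected.dist_eq_zero_iff, eq_comm]
    have e0 := card_sphere_mul hG y (i := 0) (by omega)
    have e1 := card_sphere_mul hG y (i := 1) (by omega)
    have e2 := card_sphere_mul hG y (i := 2) (by omega)
    simp only [zero_add, Nat.reduceAdd, h0, hb0, hb1, hb2, hc1, hc2, hc3] at e0 e1 e2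
    have e1' := Nat.eq_of_mul_eq_mul_right hm e1
    have h3 : #{z | G.dist y z = 3} = 1 := by
      apply Nat.eq_of_mul_eq_mul_right hk
      omega
    obtain ⟨y', hy'⟩ := Finset.card_eq_one.1 h3
    refine ⟨y', fun z => ?_⟩
    have := Finset.ext_iff.1 hy' z
    simpa using this
  choose anti hanti using h
  exact ⟨anti, hanti⟩

/-- A vertex at distance two from `y` is adjacent to the antipode of `y`. -/
lemma adj_antipode (hG : G.IsDRG 3 b c) (hb2 : b 2 = 1) {anti : V → V}
    (hanti : ∀ y z, G.dist y z = 3 ↔ z = anti y) {y z : V} (h : G.dist y z = 2) :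
    G.Adj z (anti y) := by
  have h1 := hG.b_eq 2 (by omega) y z h
  rw [hb2] at h1
  obtain ⟨w, hw⟩ := Finset.card_pos.1 (h1 ▸ one_pos)
  rw [Finset.mem_filter, mem_neighborFinset] at hw
  rw [← (hanti y w).1 hw.2]
  exact hw.1

lemma card_common_of_adj (hG : G.IsDRG 3 b c) (hb0 : b 0 = k) (hb1 : b 1 = m)
    (hc1 : c 1 = 1) {u v : V} (h : G.Adj u v) :
    #(G.neighborFinset u ∩ G.neighborFinset v) + m + 1 = k := by
  have huv : G.dist u v = 1 := dist_eq_one_iff_adj.2 h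
  have h1 := hG.b_eq 1 (by omega) u v huv
  have h2 := hG.c_eq 1 (by omega) u v huv
  have h3 := (isRegular_of_isDRG hG hb0).degree_eq v
  rw [← card_neighborFinset_eq_degree] at h3
  rw [hb1] at h1
  rw [hc1] at h2
  have hsplit := Finset.card_filter_add_card_filter_not (s := G.neighborFinset v) (fun z => G.Adj u z)
  have e1 : #(G.neighborFinset u ∩ G.neighborFinset v) =
      #{z ∈ G.neighborFinset v | G.Adj u z} := by
    congr 1
    ext z
    simp [and_comm]
  have e2 : #{z ∈ G.neighborFinset v | ¬ G.Adj u z} =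
      #{z ∈ G.neighborFinset v | G.dist u z = 1 + 1} +
      #{z ∈ G.neighborFinset v | G.dist u z + 1 = 1} := by
    rw [← Finset.card_union_of_disjoint]
    · congr 1
      ext z
      simp only [Finset.mem_union, Finset.mem_filter, mem_neighborFinset]
      rw [← dist_eq_one_iff_adj (u := u)]
      constructor
      · rintro ⟨h, h'⟩
        have := hG.connected.dist_triangle (u := u) (v := v) (w := z)
        rw [huv, dist_eq_one_iff_adj.2 h] at this
        have : G.dist u z + 1 = 1 ∨ G.dist u z = 1 + 1 := by omega
        tauto
      · rintro (⟨h, h'⟩ | ⟨h, h'⟩) <;> exact ⟨h, by omega⟩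
    · rw [Finset.disjoint_left]
      intro z hz hz'
      rw [Finset.mem_filter] at hz hz'
      omega
  omega

lemma card_common_of_dist_two (hG : G.IsDRG 3 b c) (hc2 : c 2 = m) {u v : V} (h : G.dist u v = 2) :
    #(G.neighborFinset u ∩ G.neighborFinset v) = m := by
  rw [← hc2, ← hG.c_eq 2 (by omega) u v h]
  congr 1
  ext z
  rw [Finset.mem_inter, Finset.mem_filter, mem_neighborFinset, mem_neighborFinset,
    ← dist_eq_one_iff_adj (u := u), and_comm]
  exact and_congr_right fun _ => by omega

lemma dist_eq_two (hG : G.IsDRG 3 b c) {x u v : V} (hu : G.Adj x u) (hv : G.Adj x v)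
    (huv : u ≠ v) (h : ¬ G.Adj u v) : G.dist u v = 2 := by
  have h1 := hG.connected.one_lt_dist_of_ne_of_not_adj huv h
  have h2 := hG.connected.dist_triangle (u := u) (v := x) (w := v)
  rw [dist_eq_one_iff_adj.2 hu.symm, dist_eq_one_iff_adj.2 hv] at h2
  omega

/-- The common neighbours of `u, v ∈ Δ(x)` are those in `Δ(x)`, the vertex `x`, and the antipodes of
the vertices of `Δ(x)` distinct from and nonadjacent to both `u` and `v`. -/
lemma card_common_eq (hG : G.IsDRG 3 b c) (hb2 : b 2 = 1) {anti : V → V}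
    (hanti : ∀ y z, G.dist y z = 3 ↔ z = anti y) {x u v : V}
    (hu : G.Adj x u) (hv : G.Adj x v) :
    #(G.neighborFinset u ∩ G.neighborFinset v) =
      #(G.neighborFinset x ∩ G.neighborFinset u ∩ G.neighborFinset v) +
      (#(G.neighborFinset x \ (G.neighborFinset u ∪ G.neighborFinset v ∪ {u, v})) + 1) := by
  have hinv : ∀ y, anti (anti y) = y := by
    intro y
    have := (hanti y (anti y)).2 rfl
    rw [dist_comm] at this
    exact ((hanti _ _).1 this).symm
  have hinj : Function.Injective anti := Function.LeftInverse.injective hinv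
  rw [← Finset.card_filter_add_card_filter_not (s := G.neighborFinset u ∩ G.neighborFinset v)
    (fun z => G.Adj x z)]
  congr 1
  · congr 1
    ext z
    simp only [Finset.mem_filter, Finset.mem_inter, mem_neighborFinset]
    tauto
  · set Z := G.neighborFinset x \ (G.neighborFinset u ∪ G.neighborFinset v ∪ {u, v}) with hZ
    rw [← Finset.card_image_of_injective Z hinj,
      ← Finset.card_insert_of_notMem (a := x) (s := Z.image anti)]
    · congr 1
      ext z
      simp only [hZ, Finset.mem_filter, Finset.mem_inter, mem_neighborFinset, Finset.mem_insert,
        Finset.mem_image, Finset.mem_sdiff, Finset.mem_union, Finset.mem_singleton, not_or]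
      constructor
      · rintro ⟨⟨h1, h2⟩, h3⟩
        by_cases hzx : z = x
        · exact Or.inl hzx
        right
        refine ⟨anti z, ⟨?_, ?_⟩, hinv z⟩
        · exact adj_antipode hG hb2 hanti (dist_eq_two hG h1 hu.symm hzx (fun h => h3 h.symm))
        · have h4 : G.dist z (anti z) = 3 := (hanti _ _).2 rfl
          have key : ∀ w, G.Adj w z → ¬ G.Adj w (anti z) ∧ ¬ anti z = w := by
            intro w hw
            constructor
            · intro h
              have h2 := hG.connected.dist_triangle (u := z) (v := w) (w := anti z)
              rw [dist_eq_one_iff_adj.2 hw.symm, dist_eq_one_iff_adj.2 h] at h2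
              omega
            · intro h
              rw [h, dist_eq_one_iff_adj.2 hw.symm] at h4
              omega
          exact ⟨⟨(key u h1).1, (key v h2).1⟩, (key u h1).2, (key v h2).2⟩
      · rintro (rfl | ⟨w, ⟨hw, ⟨hwu, hwv⟩, hneu, hnev⟩, rfl⟩)
        · exact ⟨⟨hu.symm, hv.symm⟩, G.irrefl⟩
        · refine ⟨⟨?_, ?_⟩, ?_⟩
          · exact adj_antipode hG hb2 hanti (dist_eq_two hG hw hu hneu (fun h => hwu h.symm))
          · exact adj_antipode hG hb2 hanti (dist_eq_two hG hw hv hnev (fun h => hwv h.symm))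
          · intro h
            have h4 : G.dist w (anti w) = 3 := (hanti _ _).2 rfl
            have h2 := hG.connected.dist_triangle (u := w) (v := x) (w := anti w)
            rw [dist_eq_one_iff_adj.2 hw.symm, dist_eq_one_iff_adj.2 h] at h2
            omega
    · rw [Finset.mem_image]
      rintro ⟨w, hw, hwx⟩
      rw [hZ, Finset.mem_sdiff, mem_neighborFinset] at hw
      have h4 := (hanti w x).2 hwx.symm
      rw [dist_comm, dist_eq_one_iff_adj.2 hw.1] at h4
      omega

/-- The number of common neighbours of `u` and `v` inside `Δ(x)` depends only on their adjacency:
combine `card_common_eq` with inclusion-exclusion in `Δ(x)`. -/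
lemma card_triple (hG : G.IsDRG 3 b c) (hb0 : b 0 = k) (hb1 : b 1 = m) (hb2 : b 2 = 1)
    (hc1 : c 1 = 1) (hc2 : c 2 = m) {anti : V → V}
    (hanti : ∀ y z, G.dist y z = 3 ↔ z = anti y) {x u v : V}
    (hu : G.Adj x u) (hv : G.Adj x v) (huv : u ≠ v) {a : ℕ} (ha : a + m + 1 = k) :
    (G.Adj u v → 2 * #(G.neighborFinset x ∩ G.neighborFinset u ∩ G.neighborFinset v) + 1 + k
      = 3 * a) ∧
    (¬ G.Adj u v → 2 * #(G.neighborFinset x ∩ G.neighborFinset u ∩ G.neighborFinset v) = a) := by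
  let N : V → Finset V := fun p => G.neighborFinset p
  change (G.Adj u v → 2 * #(N x ∩ N u ∩ N v) + 1 + k = 3 * a) ∧
    (¬ G.Adj u v → 2 * #(N x ∩ N u ∩ N v) = a)
  have h0 : #(N u ∩ N v) = #(N x ∩ N u ∩ N v) + (#(N x \ (N u ∪ N v ∪ {u, v})) + 1) :=
    card_common_eq hG hb2 hanti hu hv
  have hxk : #(N x) = k := by
    rw [card_neighborFinset_eq_degree, (isRegular_of_isDRG hG hb0).degree_eq]
  have h1 : #(N x \ (N u ∪ N v ∪ {u, v})) + #(N x ∩ (N u ∪ N v ∪ {u, v})) = k := by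
    rw [Finset.card_sdiff_add_card_inter, hxk]
  have h2 : #(N x ∩ N u ∪ N x ∩ N v) + #(N x ∩ N u ∩ N v) = 2 * a := by
    have e : N x ∩ N u ∩ N v = (N x ∩ N u) ∩ (N x ∩ N v) := by grind
    have eu : #(N x ∩ N u) + m + 1 = k := card_common_of_adj hG hb0 hb1 hc1 hu
    have ev : #(N x ∩ N v) + m + 1 = k := card_common_of_adj hG hb0 hb1 hc1 hv
    rw [e, Finset.card_union_add_card_inter]
    omega
  have hmem : ∀ p q, q ∈ N p ↔ G.Adj p q := fun p q => mem_neighborFinset _ _ _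
  constructor
  · intro hadj
    have e : N x ∩ (N u ∪ N v ∪ {u, v}) = N x ∩ N u ∪ N x ∩ N v := by
      ext z
      have h1 := hadj.symm
      simp only [Finset.mem_inter, Finset.mem_union, Finset.mem_insert, Finset.mem_singleton, hmem]
      constructor
      · rintro ⟨h, (h' | h') | rfl | rfl⟩ <;> tauto
      · tauto
    rw [e] at h1
    have : #(N u ∩ N v) + m + 1 = k := card_common_of_adj hG hb0 hb1 hc1 hadj
    omega
  · intro hadj
    have e : N x ∩ (N u ∪ N v ∪ {u, v}) = (N x ∩ N u ∪ N x ∩ N v) ∪ {u, v} := by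
      ext z
      simp only [Finset.mem_inter, Finset.mem_union, Finset.mem_insert, Finset.mem_singleton, hmem]
      constructor
      · tauto
      · rintro ((h | h) | rfl | rfl) <;> tauto
    have hd : Disjoint (N x ∩ N u ∪ N x ∩ N v) {u, v} := by
      rw [Finset.disjoint_right]
      intro z hz
      simp only [Finset.mem_inter, Finset.mem_union, Finset.mem_insert, Finset.mem_singleton, hmem]
        at hz ⊢
      have h1 : ¬ G.Adj v u := fun h => hadj h.symm
      rcases hz with rfl | rfl <;> simp [hadj, h1]
    rw [e, Finset.card_union_of_disjoint hd, Finset.card_pair huv] at h1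
    have : #(N u ∩ N v) = m := card_common_of_dist_two hG hc2 (dist_eq_two hG hu hv huv hadj)
    omega

lemma localGraph_degree (x : V) (y : G.neighborSet x) :
    (G.localGraph x).degree y = #(G.neighborFinset x ∩ G.neighborFinset y) := by
  rw [← card_neighborFinset_eq_degree]
  refine Finset.card_bij (fun w _ => w.1) ?_ ?_ ?_
  · intro w hw
    rw [mem_neighborFinset] at hw
    simpa using ⟨w.2, hw⟩
  · intro w _ w' _ h
    exact Subtype.ext h
  · intro w hw
    rw [Finset.mem_inter, mem_neighborFinset, mem_neighborFinset] at hw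
    exact ⟨⟨w, hw.1⟩, (mem_neighborFinset _ _ _).2 hw.2, rfl⟩

lemma localGraph_card_common (x : V) (u v : G.neighborSet x) :
    Fintype.card ((G.localGraph x).commonNeighbors u v) =
      #(G.neighborFinset x ∩ G.neighborFinset u ∩ G.neighborFinset v) := by
  rw [← Set.toFinset_card]
  refine Finset.card_bij (fun w _ => w.1) ?_ ?_ ?_
  · intro w hw
    rw [Set.mem_toFinset] at hw
    simpa [and_assoc] using ⟨w.2, hw.1, hw.2⟩
  · intro w _ w' _ h
    exact Subtype.ext h
  · intro w hw
    simp only [Finset.mem_inter, mem_neighborFinset] at hw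
    exact ⟨⟨w, hw.1.1⟩, Set.mem_toFinset.2 ⟨hw.1.2, hw.2⟩, rfl⟩

/-- The local graph is strongly regular with parameters `(k, a, l, μ)`, where `a = k - m - 1 = 2 μ`
and `2 l = 3 a - k - 1`. -/
lemma localGraph_isSRG (hG : G.IsDRG 3 b c) (hb0 : b 0 = k) (hb1 : b 1 = m) (hb2 : b 2 = 1)
    (hc1 : c 1 = 1) (hc2 : c 2 = m) (hc3 : c 3 = k) (ha1 : m + 3 ≤ k) (x : V) :
    0 < m ∧ ∃ a l μ : ℕ, (G.localGraph x).IsSRGWith k a l μ ∧ a + m + 1 = k ∧ a = 2 * μ ∧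
      2 * l + 1 + k = 3 * a := by
  have hm := m_pos hG hc2 hc3 (by omega)
  obtain ⟨anti, hanti⟩ := exists_antipode hG hb0 hb1 hb2 hc1 hc2 hc3 (by omega)
  obtain ⟨a, ha⟩ : ∃ a, a + m + 1 = k := ⟨k - m - 1, by omega⟩
  have hcard : Fintype.card (G.neighborSet x) = k := by
    rw [card_neighborSet_eq_degree, (isRegular_of_isDRG hG hb0).degree_eq]
  have hdeg : (G.localGraph x).IsRegularOfDegree a := by
    intro y
    rw [localGraph_degree]
    have := card_common_of_adj hG hb0 hb1 hc1 (u := x) (v := y) y.2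
    omega
  have hadj : ∀ u v, (G.localGraph x).Adj u v →
      2 * Fintype.card ((G.localGraph x).commonNeighbors u v) + 1 + k = 3 * a := by
    intro u v h
    rw [localGraph_card_common]
    exact (card_triple hG hb0 hb1 hb2 hc1 hc2 hanti u.2 v.2
      (fun e => h.ne (Subtype.ext e)) ha).1 h
  have hnadj : ∀ u v, u ≠ v → ¬ (G.localGraph x).Adj u v →
      2 * Fintype.card ((G.localGraph x).commonNeighbors u v) = a := by
    intro u v hne h
    rw [localGraph_card_common]
    exact (card_triple hG hb0 hb1 hb2 hc1 hc2 hanti u.2 v.2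
      (fun e => hne (Subtype.ext e)) ha).2 h
  obtain ⟨y⟩ : Nonempty (G.neighborSet x) := by
    rw [← Fintype.card_pos_iff, hcard]; omega
  obtain ⟨w, hw⟩ : ∃ w, (G.localGraph x).Adj y w := by
    have : 0 < (G.localGraph x).degree y := by rw [hdeg.degree_eq]; omega
    exact (degree_pos_iff_exists_adj _ y).1 this
  obtain ⟨z, hz⟩ : ∃ z, (G.localGraph x)ᶜ.Adj y z := by
    have : 0 < (G.localGraph x)ᶜ.degree y := by
      rw [hdeg.compl.degree_eq, hcard]; omega
    exact (degree_pos_iff_exists_adj _ y).1 this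
  rw [compl_adj] at hz
  have e1 := hadj y w hw
  have e2 := hnadj y z hz.1 hz.2
  refine ⟨hm, a, _, _, ⟨hcard, hdeg, fun u v h => ?_, fun u v hne h => ?_⟩, ha, e2.symm, e1⟩
  · have := hadj u v h
    omega
  · have := hnadj u v hne h
    omega

end Taylor

theorem taylor_graph_classification {V : Type*} [Fintype V] [DecidableEq V]
    (G : SimpleGraph V) [DecidableRel G.Adj] (k m : ℕ) (b c : ℕ → ℕ)
    (hG : G.IsDRG 3 b c)
    (hb0 : b 0 = k) (hb1 : b 1 = m) (hb2 : b 2 = 1)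
    (hc1 : c 1 = 1) (hc2 : c 2 = m) (hc3 : c 3 = k)
    (ha1 : (2 : ℤ) ≤ (k : ℤ) - m - 1)
    (x : V) (hx : Matrix.SecondEigLE ((G.localGraph x).adjMatrix ℝ) 1) :
    (∃ ℓ' μ', ((G.localGraph x)ᶜ).IsSRGWith k m ℓ' μ') ∧
    ((G.localGraph x)ᶜ).Connected ∧ (G.localGraph x)ᶜ ≠ ⊤ ∧
    (∀ hA : (((G.localGraph x)ᶜ).adjMatrix ℝ).IsHermitian, ∀ j, -2 ≤ hA.eigenvalues j) ∧
    ((k = 5 ∧ m = 2) ∨ (k = 9 ∧ m = 4) ∨ (k = 15 ∧ m = 8) ∨ (k = 27 ∧ m = 16)) := by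
  obtain ⟨hm, a, l, μ, hS, hka, haμ, hl⟩ :=
    localGraph_isSRG hG hb0 hb1 hb2 hc1 hc2 hc3 (by omega) x
  have hk : k + 2 * l + 1 = 6 * μ := by omega
  have hl1 := lambda_le_one hS haμ hk (by omega) (by omega) hx
  have hlist : (l = 0 ∧ μ = 1) ∨ (l = 1 ∧ (μ = 2 ∨ μ = 3 ∨ μ = 5)) := by
    obtain rfl | rfl : l = 0 ∨ l = 1 := by omega
    · exact Or.inl ⟨rfl, mu_eq_one hS haμ (by omega) (by omega)⟩
    · exact Or.inr ⟨rfl, mu_mem hS haμ (by omega) (by omega)⟩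
  have hc := hS.compl
  rw [show k - a - 1 = m by omega] at hc
  refine ⟨⟨_, _, hc⟩, connected_of_isSRGWith hc (by omega) (by omega), ?_,
    fun hA j => neg_two_le_eigenvalue hS.regular (by omega) hx hA j, by omega⟩
  intro htop
  obtain ⟨y⟩ : Nonempty (G.neighborSet x) := by
    rw [← Fintype.card_pos_iff, hS.card]; omega
  have hdeg := hS.regular.degree_eq y
  obtain ⟨w, hw⟩ : ∃ w, (G.localGraph x).Adj y w := by
    have : 0 < (G.localGraph x).degree y := by omega
    exact (degree_pos_iff_exists_adj _ y).1 this
  have h1 : (G.localGraph x)ᶜ.Adj y w := by rw [htop]; exact hw.ne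
  exact ((compl_adj _ _ _).1 h1).2 hw
end
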